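/- arXiv:2301.03542 — 4 statements merged into one kernel-verified Lean document; each statement's English description precedes it below -/
import Mathlib

section
/- Let 𝒫 ⊂ 𝒟 be a set of laws on ℝ^d whose Lebesgue densities are strictly positive Lebesgue-a.e. (so that 𝒫 together with its L¹-closure is mutually absolutely continuous), and let cl(𝒫) denote the closure of 𝒫 in the L¹ distance between Lebesgue densities. Then the closed fork-convex hull of the independent-product laws over 𝒫 contains the independent-product laws over the closure: cl-f-conv(⨂𝒫) ⊇ ⨂cl(𝒫). -/
open MeasureTheory ProbabilityTheory Filter Finset Matrix
open scoped Classical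

noncomputable section

namespace SeqTest

/-- `ℝ^d`. -/
abbrev RV (d : ℕ) := Fin d → ℝ

/-- The sequence space `Ω = (ℝ^d)^ℕ`. -/
abbrev Seq (d : ℕ) := ℕ → RV d

variable (d : ℕ)


/-- The first `t` coordinates of a sequence. -/
def prefixMap (t : ℕ) : Seq d → (Fin t → RV d) := fun ω s => ω s

/-- The law of the first `t` coordinates under a sequential law `μ`. -/
def prefixLaw (μ : Measure (Seq d)) (t : ℕ) : Measure (Fin t → RV d) :=
  μ.map (prefixMap d t)

/-- The natural filtration of the coordinate process: `ℱ t = σ(X_0, …, X_{t-1})`. -/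
def F : Filtration ℕ (inferInstance : MeasurableSpace (Seq d)) where
  seq t := ⨆ s ∈ Finset.range t, MeasurableSpace.comap (fun ω : Seq d => ω s) inferInstance
  mono' := by
    intro i j hij
    exact biSup_mono fun s hs => Finset.mem_range.mpr
      (lt_of_lt_of_le (Finset.mem_range.mp hs) hij)
  le' := by
    intro t
    refine iSup₂_le fun s _ => ?_
    exact measurable_iff_comap_le.mp (measurable_pi_apply s)

/-- Local absolute continuity of sequential laws: every prefix law of `μ` is
absolutely continuous w.r.t. the corresponding prefix law of `Γ`. -/
def LocAC (μ Γ : Measure (Seq d)) : Prop := ∀ t, prefixLaw d μ t ≪ prefixLaw d Γ t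

/-- The density (likelihood-ratio) process `Z_t^μ = d(μ|_t)/d(Γ|_t)` evaluated along the path. -/
def Z (μ Γ : Measure (Seq d)) (t : ℕ) (ω : Seq d) : ℝ :=
  ((prefixLaw d μ t).rnDeriv (prefixLaw d Γ t) (prefixMap d t ω)).toReal

/-- The standard Gaussian measure on `ℝ^d`. -/
def stdGaussian : Measure (RV d) := Measure.pi fun _ => gaussianReal 0 1

/-- `Γ` is the law of an i.i.d. sequence of standard Gaussians: characterized through its
finite-dimensional rectangle probabilities. -/
def IsGamma (Γ : Measure (Seq d)) : Prop :=
  IsProbabilityMeasure Γ ∧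
    ∀ (t : ℕ) (A : Fin t → Set (RV d)), (∀ s, MeasurableSet (A s)) →
      prefixLaw d Γ t (Set.univ.pi A) = ∏ s, stdGaussian d (A s)

/-- `M` is a nonnegative supermartingale for the sequential law `μ`
(w.r.t. the natural filtration). -/
def IsNSM (μ : Measure (Seq d)) (M : ℕ → Seq d → ℝ) : Prop :=
  (∀ t ω, 0 ≤ M t ω) ∧ Supermartingale M (F d) μ

/-- `M` is a nonnegative martingale for the sequential law `μ`. -/
def IsNM (μ : Measure (Seq d)) (M : ℕ → Seq d → ℝ) : Prop :=
  (∀ t ω, 0 ≤ M t ω) ∧ Martingale M (F d) μ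


/-- `R` is the `(s,h)`-fork-convex combination of `P` with `Q` (relative to the
reference law `Γ`), described through its density process. -/
def IsFCC (Γ P Q : Measure (Seq d)) (s : ℕ) (h : Seq d → ℝ) (R : Measure (Seq d)) : Prop :=
  IsProbabilityMeasure P ∧ IsProbabilityMeasure Q ∧ LocAC d P Γ ∧ LocAC d Q Γ ∧
  Measurable[F d s] h ∧ (∀ ω, h ω ∈ Set.Icc (0 : ℝ) 1) ∧
  Γ {ω | h ω < 1 ∧ Z d Q Γ s ω = 0} = 0 ∧
  IsProbabilityMeasure R ∧ LocAC d R Γ ∧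
  ∀ t : ℕ, (fun ω => Z d R Γ t ω) =ᵐ[Γ]
    (fun ω => if t ≤ s then Z d P Γ t ω
      else h ω * Z d P Γ t ω + (1 - h ω) * Z d Q Γ t ω * (Z d P Γ s ω / Z d Q Γ s ω))

/-- A set of sequential laws is fork-convex if it is closed under fork-convex combinations. -/
def IsForkConvex (Γ : Measure (Seq d)) (S : Set (Measure (Seq d))) : Prop :=
  ∀ P ∈ S, ∀ Q ∈ S, ∀ (s : ℕ) (h : Seq d → ℝ) (R : Measure (Seq d)),
    IsFCC d Γ P Q s h R → R ∈ S

/-- The fork-convex hull: the smallest fork-convex set containing `𝔓`. -/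
def fconv (Γ : Measure (Seq d)) (𝔓 : Set (Measure (Seq d))) : Set (Measure (Seq d)) :=
  ⋂₀ {S | 𝔓 ⊆ S ∧ IsForkConvex d Γ S}

/-- Convergence of sequential laws: the density processes converge in `L¹(Γ)` at every fixed time. -/
def TendstoLocL1 (Γ : Measure (Seq d)) (Pn : ℕ → Measure (Seq d)) (P : Measure (Seq d)) : Prop :=
  ∀ t, Tendsto (fun n => ∫ ω, |Z d (Pn n) Γ t ω - Z d P Γ t ω| ∂Γ) atTop (nhds 0)

/-- The closed fork-convex hull: the closure of the fork-convex hull under local `L¹(Γ)`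
convergence of density processes. -/
def clfconv (Γ : Measure (Seq d)) (𝔓 : Set (Measure (Seq d))) : Set (Measure (Seq d)) :=
  {P | IsProbabilityMeasure P ∧ LocAC d P Γ ∧
    ∃ Pn : ℕ → Measure (Seq d), (∀ n, Pn n ∈ fconv d Γ 𝔓) ∧ TendstoLocL1 d Γ Pn P}

/-- `μ` is the law of an i.i.d. sequence with marginal `P`. -/
def IsIIDLaw (μ : Measure (Seq d)) (P : Measure (RV d)) : Prop :=
  IsProbabilityMeasure μ ∧
    ∀ (t : ℕ) (A : Fin t → Set (RV d)), (∀ s, MeasurableSet (A s)) →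
      prefixLaw d μ t (Set.univ.pi A) = ∏ s, P (A s)

/-- `μ` is the law of an independent sequence with marginals `Ps 0, Ps 1, …`. -/
def IsProductLaw (μ : Measure (Seq d)) (Ps : ℕ → Measure (RV d)) : Prop :=
  IsProbabilityMeasure μ ∧
    ∀ (t : ℕ) (A : Fin t → Set (RV d)), (∀ s, MeasurableSet (A s)) →
      prefixLaw d μ t (Set.univ.pi A) = ∏ s : Fin t, Ps s (A s)

/-- The set of i.i.d. sequential laws with marginals in `PP`. -/
def iidLaws (PP : Set (Measure (RV d))) : Set (Measure (Seq d)) :=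
  {μ | ∃ P ∈ PP, IsIIDLaw d μ P}

/-- The set of independent-product sequential laws with all marginals in `PP`. -/
def productLaws (PP : Set (Measure (RV d))) : Set (Measure (Seq d)) :=
  {μ | ∃ Ps : ℕ → Measure (RV d), (∀ t, Ps t ∈ PP) ∧ IsProductLaw d μ Ps}




/-- The density of the `d`-dimensional Gaussian with mean `m` and covariance matrix `S`. -/
def gaussDensityFn (m : RV d) (S : Matrix (Fin d) (Fin d) ℝ) (x : RV d) : ℝ :=
  (2 * Real.pi) ^ (-(d : ℝ) / 2) * S.det ^ (-(1 : ℝ) / 2) *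
    Real.exp (-(1 / 2) * ((x - m) ⬝ᵥ (S⁻¹ *ᵥ (x - m))))

/-- A finite mixture of nondegenerate Gaussian densities. -/
def IsGaussianMixture (g : RV d → ℝ) : Prop :=
  ∃ (k : ℕ) (α : Fin k → ℝ) (ms : Fin k → RV d) (Ss : Fin k → Matrix (Fin d) (Fin d) ℝ),
    (∀ i, 0 ≤ α i) ∧ (∑ i, α i = 1) ∧ (∀ i, (Ss i).PosDef) ∧
    g = fun x => ∑ i, α i * gaussDensityFn d (ms i) (Ss i) x

/-- A log-concave nonnegative function on `ℝ^d`. -/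
def IsLogConcaveFn (p : RV d → ℝ) : Prop :=
  (∀ x, 0 ≤ p x) ∧
    ∀ (x y : RV d) (l : ℝ), 0 ≤ l → l ≤ 1 →
      p x ^ l * p y ^ (1 - l) ≤ p (l • x + (1 - l) • y)

/-- A log-concave probability density on `ℝ^d`. -/
def IsLogConcaveDensity (p : RV d → ℝ) : Prop :=
  Measurable p ∧ IsLogConcaveFn d p ∧ ∫ x, p x = 1

/-- The set `𝓛` of laws on `ℝ^d` with a log-concave Lebesgue density. -/
def logConcaveLaws : Set (Measure (RV d)) :=
  {P | IsProbabilityMeasure P ∧ ∃ p : RV d → ℝ, Measurable p ∧ IsLogConcaveFn d p ∧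
    P = volume.withDensity fun x => ENNReal.ofReal (p x)}

/-- The set `𝒢` of nondegenerate Gaussian laws on `ℝ^d`. -/
def gaussianLaws : Set (Measure (RV d)) :=
  {P | ∃ (m : RV d) (S : Matrix (Fin d) (Fin d) ℝ), S.PosDef ∧
    P = volume.withDensity fun x => ENNReal.ofReal (gaussDensityFn d m S x)}

/-- An estimator sequence: a measurable family of (strictly positive) predictable
probability density estimates. -/
def IsEstimatorSeq (E : (t : ℕ) → (Fin t → RV d) → RV d → ℝ) : Prop :=
  (∀ t, Measurable fun q : (Fin t → RV d) × RV d => E t q.1 q.2) ∧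
  (∀ t h x, 0 < E t h x) ∧ (∀ t h, ∫ x, E t h x = 1)

/-- The universal likelihood ratio (ULR) process. Time `t` corresponds to having observed
the `t` samples `ω 0, …, ω (t-1)`. -/
def ULR (E : (t : ℕ) → (Fin t → RV d) → RV d → ℝ) (t : ℕ) (ω : Seq d) : ℝ :=
  if t ≤ d then 1 else
    (∏ j ∈ Finset.Ico d t, E j (fun i : Fin j => ω i) (ω j)) /
      ⨆ p : {p : RV d → ℝ // IsLogConcaveDensity d p}, ∏ j ∈ Finset.Ico d t, p.1 (ω j)

/-- The prediction (cumulative log-loss) regret of the estimator sequence `E` relative to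
the density of `P`. -/
def regret (P : Measure (RV d)) (E : (t : ℕ) → (Fin t → RV d) → RV d → ℝ)
    (t : ℕ) (ω : Seq d) : ℝ :=
  ∑ j ∈ Finset.range t,
    (Real.log ((P.rnDeriv volume (ω j)).toReal) - Real.log (E j (fun i : Fin j => ω i) (ω j)))

/-- The Hellinger distance between two laws on `ℝ^d` (via their Lebesgue densities). -/
def hellinger (P Q : Measure (RV d)) : ℝ :=
  Real.sqrt ((1 / 2) *
    ∫ x, (Real.sqrt ((P.rnDeriv volume x).toReal) - Real.sqrt ((Q.rnDeriv volume x).toReal)) ^ 2)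

/-- The Hellinger distance from `P` to the class of log-concave laws. -/
def dHLC (P : Measure (RV d)) : ℝ :=
  sInf {r | ∃ L ∈ logConcaveLaws d, r = hellinger d P L}

/-- The Kullback–Leibler divergence. -/
def klDivR {α : Type*} [MeasurableSpace α] (P Q : Measure α) : EReal :=
  if P ≪ Q ∧ Integrable (fun x => Real.log ((P.rnDeriv Q x).toReal)) P
  then ((∫ x, Real.log ((P.rnDeriv Q x).toReal) ∂P : ℝ) : EReal) else ⊤

/-- Membership in `𝒟₁`. -/
def MemD1 (P : Measure (RV d)) : Prop :=
  IsProbabilityMeasure P ∧ P ≪ volume ∧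
  Integrable (fun x => max 0 (Real.log ((P.rnDeriv volume x).toReal))) P ∧
  Integrable (fun x => Real.sqrt (∑ i, (x i) ^ 2)) P

/-- The log-likelihood gap `σ_t(P)` between the true density and the log-concave maximum
likelihood. -/
def sigmaT (P : Measure (RV d)) (t : ℕ) (ω : Seq d) : ℝ :=
  (∑ j ∈ Finset.range t, Real.log ((P.rnDeriv volume (ω j)).toReal)) -
    ⨆ p : {p : RV d → ℝ // IsLogConcaveDensity d p},
      ∑ j ∈ Finset.range t, Real.log (p.1 (ω j))

/-- The mean vector of `P`. -/
def meanVec (P : Measure (RV d)) : RV d := fun i => ∫ x, x i ∂P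

/-- `Δ_P = min_{‖v‖=1} E_P |⟨v, X − E_P X⟩|`. -/
def DeltaP (P : Measure (RV d)) : ℝ :=
  sInf {r | ∃ v : RV d, (∑ i, (v i) ^ 2) = 1 ∧
    r = ∫ x, |∑ i, v i * (x i - meanVec d P i)| ∂P}

/-- The class `𝒟_{Box,Lip,B}`: laws with a `1`-Lipschitz density supported on `[-1,1]^d`
taking values in `[1/B, B]` there. -/
def DBoxLip (B : ℝ) : Set (Measure (RV d)) :=
  {P | IsProbabilityMeasure P ∧ ∃ p : RV d → ℝ, Measurable p ∧
    P = volume.withDensity (fun x => ENNReal.ofReal (p x)) ∧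
    (∀ x, ¬ (∀ i, |x i| ≤ 1) → p x = 0) ∧
    (∀ x, (∀ i, |x i| ≤ 1) → 1 / B ≤ p x ∧ p x ≤ B) ∧
    (∀ x y, (∀ i, |x i| ≤ 1) → (∀ i, |y i| ≤ 1) →
      |p x - p y| ≤ Real.sqrt (∑ i, (x i - y i) ^ 2))}



/-- The `L¹` distance between the Lebesgue densities of two laws. -/
def L1dist (P Q : Measure (RV d)) : ℝ :=
  ∫ x, |(P.rnDeriv volume x).toReal - (Q.rnDeriv volume x).toReal|

/-- The closure of a family of laws with densities in the `L¹` distance between densities. -/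
def L1closure (PP : Set (Measure (RV d))) : Set (Measure (RV d)) :=
  {Q | IsProbabilityMeasure Q ∧ Q ≪ (volume : Measure (RV d)) ∧
    ∃ Pn : ℕ → Measure (RV d), (∀ n, Pn n ∈ PP) ∧
      Tendsto (fun n => L1dist d (Pn n) Q) atTop (nhds 0)}

/-!
Write a product density as `∏ i, f i (x i)`. Exchanging its factors one at a time for those of
another product density changes it in `L¹` by at most the sum of the marginal `L¹` distances, since
all other factors integrate to one. Hence an independent law whose marginals are `L¹` limits of laws
in `𝒫` is, at each fixed time, the `L¹` limit of the independent laws built from the approximating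
marginals; these already lie in `⨂𝒫`, so no forking is needed to reach them. The `L¹`
distance between densities does not depend on the dominating measure, so Lebesgue and Gaussian
reference measures can be used interchangeably.
-/

section ProductMeasures

variable {ι : Type*} {X : ι → Type*} [∀ i, MeasurableSpace (X i)]

theorem lmarginal_finset_prod (γ : ∀ i, Measure (X i)) [∀ i, SigmaFinite (γ i)]
    {f : ∀ i, X i → ENNReal} (hf : ∀ i, Measurable (f i)) (s : Finset ι) :
    (∫⋯∫⁻_s, (fun x => ∏ i ∈ s, f i (x i)) ∂γ) = fun _ => ∏ i ∈ s, ∫⁻ x, f i x ∂γ i := by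
  induction s using Finset.induction_on with
  | empty => simp only [Finset.prod_empty, lmarginal_empty]
  | insert a s ha ih =>
    have hmeas (s : Finset ι) : Measurable fun x : ∀ i, X i => ∏ i ∈ s, f i (x i) := by fun_prop
    have integrate_coord (x : ∀ i, X i) :
        ∫⁻ y, ∏ i ∈ insert a s, f i (Function.update x a y i) ∂γ a =
          (∫⁻ y, f a y ∂γ a) * ∏ i ∈ s, f i (x i) := by
      rw [← lintegral_mul_const _ (hf a)]
      refine lintegral_congr fun y => ?_
      rw [Finset.prod_insert ha, Function.update_self]
      congr 1
      refine Finset.prod_congr rfl fun i hi => ?_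
      rw [Function.update_of_ne (ne_of_mem_of_not_mem hi ha)]
    rw [lmarginal_insert' _ (hmeas _) ha, Finset.prod_insert ha, funext integrate_coord]
    funext x
    rw [← congrFun ih x]
    exact lintegral_const_mul _ ((hmeas s).comp measurable_updateFinset)

variable [Fintype ι]

theorem lintegral_fintype_prod_eq_prod (γ : ∀ i, Measure (X i)) [∀ i, SigmaFinite (γ i)]
    {f : ∀ i, X i → ENNReal} (hf : ∀ i, Measurable (f i)) :
    ∫⁻ x, ∏ i, f i (x i) ∂Measure.pi γ = ∏ i, ∫⁻ x, f i x ∂γ i := by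
  obtain hX | ⟨⟨x⟩⟩ := isEmpty_or_nonempty (∀ i, X i)
  · obtain ⟨i, hi⟩ := isEmpty_pi.mp hX
    rw [lintegral_of_isEmpty, Finset.prod_eq_zero (Finset.mem_univ i) (lintegral_of_isEmpty _ _)]
  · rw [lintegral_eq_lmarginal_univ x, lmarginal_finset_prod γ hf]

theorem pi_withDensity (γ : ∀ i, Measure (X i)) [∀ i, SigmaFinite (γ i)] {f : ∀ i, X i → ENNReal}
    (hf : ∀ i, Measurable (f i)) [∀ i, SigmaFinite ((γ i).withDensity (f i))] :
    Measure.pi (fun i => (γ i).withDensity (f i)) =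
      (Measure.pi γ).withDensity fun x => ∏ i, f i (x i) := by
  refine Measure.pi_eq fun A hA => ?_
  rw [withDensity_apply _ (MeasurableSet.univ_pi hA), Measure.restrict_pi_pi,
    lintegral_fintype_prod_eq_prod _ hf]
  exact Finset.prod_congr rfl fun i _ => (withDensity_apply _ (hA i)).symm

variable {P γ : ∀ i, Measure (X i)} [∀ i, SigmaFinite (P i)] [∀ i, SigmaFinite (γ i)]

theorem withDensity_prod_rnDeriv_eq_pi (h : ∀ i, P i ≪ γ i) :
    (Measure.pi γ).withDensity (fun x => ∏ i, (P i).rnDeriv (γ i) (x i)) = Measure.pi P := by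
  have withDensity_eq (i : ι) : (γ i).withDensity ((P i).rnDeriv (γ i)) = P i :=
    Measure.withDensity_rnDeriv_eq _ _ (h i)
  have (i : ι) : SigmaFinite ((γ i).withDensity ((P i).rnDeriv (γ i))) := by
    rw [withDensity_eq]; infer_instance
  rw [← pi_withDensity γ fun i => Measure.measurable_rnDeriv _ _, funext withDensity_eq]

theorem absolutelyContinuous_pi (h : ∀ i, P i ≪ γ i) : Measure.pi P ≪ Measure.pi γ := by
  rw [← withDensity_prod_rnDeriv_eq_pi h]
  exact withDensity_absolutelyContinuous _ _

theorem rnDeriv_pi (h : ∀ i, P i ≪ γ i) :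
    (Measure.pi P).rnDeriv (Measure.pi γ) =ᵐ[Measure.pi γ]
      fun x => ∏ i, (P i).rnDeriv (γ i) (x i) := by
  rw [← withDensity_prod_rnDeriv_eq_pi h]
  exact Measure.rnDeriv_withDensity _ (by fun_prop)

end ProductMeasures

section Exchange

variable {ι : Type*} [Fintype ι] {X : ι → Type*}

theorem prod_update_sub {R : Type*} [CommRing R] (h : ∀ i, X i → R) (a : ι) (u v : X a → R)
    (x : ∀ i, X i) :
    ∏ i, Function.update h a (u - v) i (x i) =
      ∏ i, Function.update h a u i (x i) - ∏ i, Function.update h a v i (x i) := by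
  simp only [Function.apply_update fun i (k : X i → R) => k (x i), Pi.sub_apply]
  exact (MultilinearMap.mkPiAlgebra R ι R).map_update_sub (fun i => h i (x i)) a _ _

variable {𝕜 : Type*} [NormedField 𝕜] [∀ i, MeasurableSpace (X i)] {γ : ∀ i, Measure (X i)}
  [∀ i, SigmaFinite (γ i)]

theorem integral_norm_prod_update_sub_le {h : ∀ i, X i → 𝕜} {a : ι} (u v : X a → 𝕜)
    (hh : ∀ i ≠ a, ∫ x, ‖h i x‖ ∂γ i ≤ 1) :
    ∫ x, ‖∏ i, Function.update h a u i (x i) - ∏ i, Function.update h a v i (x i)‖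
      ∂Measure.pi γ ≤ ∫ x, ‖u x - v x‖ ∂γ a := by
  simp only [← prod_update_sub, norm_prod]
  rw [integral_fintype_prod_eq_prod fun i x => ‖Function.update h a (u - v) i x‖,
    Fintype.prod_eq_mul_prod_compl a, Function.update_self]
  refine mul_le_of_le_one_right (integral_nonneg fun x => norm_nonneg _)
    (Finset.prod_le_one (fun i _ => integral_nonneg fun x => norm_nonneg _) fun i hi => ?_)
  have hia : i ≠ a := by simpa using hi
  rw [Function.update_of_ne hia]
  exact hh i hia

variable {f g : ∀ i, X i → 𝕜}

theorem integral_norm_prod_piecewise_insert_sub_le (hf : ∀ i, ∫ x, ‖f i x‖ ∂γ i ≤ 1)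
    (hg : ∀ i, ∫ x, ‖g i x‖ ∂γ i ≤ 1) {s : Finset ι} {a : ι} (ha : a ∉ s) :
    ∫ x, ‖∏ i, (insert a s).piecewise f g i (x i) - ∏ i, s.piecewise f g i (x i)‖
      ∂Measure.pi γ ≤ ∫ x, ‖f a x - g a x‖ ∂γ a := by
  have hs : Function.update (s.piecewise f g) a (g a) = s.piecewise f g := by
    rw [← Finset.piecewise_eq_of_notMem s f g ha, Function.update_eq_self]
  have hle : ∀ i ≠ a, ∫ x, ‖s.piecewise f g i x‖ ∂γ i ≤ 1 := fun i _ =>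
    Finset.piecewise_cases s f g (fun k => ∫ x, ‖k x‖ ∂γ i ≤ 1) (hf i) (hg i)
  simpa only [hs, ← Finset.piecewise_insert] using
    integral_norm_prod_update_sub_le (f a) (g a) hle

theorem integral_norm_prod_sub_prod_le
    (hf : ∀ i, Integrable (f i) (γ i)) (hg : ∀ i, Integrable (g i) (γ i))
    (hf_le : ∀ i, ∫ x, ‖f i x‖ ∂γ i ≤ 1) (hg_le : ∀ i, ∫ x, ‖g i x‖ ∂γ i ≤ 1) :
    ∫ x, ‖∏ i, f i (x i) - ∏ i, g i (x i)‖ ∂Measure.pi γ ≤ ∑ i, ∫ x, ‖f i x - g i x‖ ∂γ i := by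
  let hybrid (s : Finset ι) (x : ∀ i, X i) : 𝕜 := ∏ i, s.piecewise f g i (x i)
  have hybrid_integrable (s : Finset ι) : Integrable (hybrid s) (Measure.pi γ) :=
    Integrable.fintype_prod_dep fun i =>
      Finset.piecewise_cases s f g (fun k => Integrable k (γ i)) (hf i) (hg i)
  have diff_integrable (s t : Finset ι) :
      Integrable (fun x => ‖hybrid s x - hybrid t x‖) (Measure.pi γ) :=
    ((hybrid_integrable s).sub (hybrid_integrable t)).norm
  have hybrid_le (s : Finset ι) : ∫ x, ‖hybrid s x - hybrid ∅ x‖ ∂Measure.pi γ ≤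
      ∑ i ∈ s, ∫ x, ‖f i x - g i x‖ ∂γ i := by
    induction s using Finset.induction_on with
    | empty => simp only [sub_self, norm_zero, integral_zero, Finset.sum_empty, le_refl]
    | insert a s ha ih =>
      calc ∫ x, ‖hybrid (insert a s) x - hybrid ∅ x‖ ∂Measure.pi γ
          ≤ ∫ x, (‖hybrid (insert a s) x - hybrid s x‖ + ‖hybrid s x - hybrid ∅ x‖)
              ∂Measure.pi γ :=
            integral_mono (diff_integrable _ _)
              ((diff_integrable _ _).add (diff_integrable _ _))
              fun x => norm_sub_le_norm_sub_add_norm_sub _ _ _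
        _ ≤ ∑ i ∈ insert a s, ∫ x, ‖f i x - g i x‖ ∂γ i := by
            rw [integral_add (diff_integrable _ _) (diff_integrable _ _), Finset.sum_insert ha]
            exact add_le_add (integral_norm_prod_piecewise_insert_sub_le hf_le hg_le ha) ih
  simpa only [hybrid, Finset.piecewise_univ, Finset.piecewise_empty] using hybrid_le Finset.univ

end Exchange

section DensityDistance

variable {α : Type*} [MeasurableSpace α]

/-- The `L¹(ν)` distance between the densities of `P` and `Q` with respect to a dominating measure
`ν`. For `ν = volume` it is `L1dist`; parts singular to `ν` are invisible to it. -/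
def densityDist (ν P Q : Measure α) : ℝ :=
  ∫ x, |(P.rnDeriv ν x).toReal - (Q.rnDeriv ν x).toReal| ∂ν

theorem densityDist_eq_of_absolutelyContinuous {ν γ P Q : Measure α} [SigmaFinite P]
    [SigmaFinite Q] [SigmaFinite ν] [SigmaFinite γ] (hP : P ≪ ν) (hQ : Q ≪ ν) (hν : ν ≪ γ) :
    densityDist γ P Q = densityDist ν P Q := by
  rw [densityDist, densityDist, ← integral_rnDeriv_smul hν]
  refine integral_congr_ae ?_
  filter_upwards [Measure.rnDeriv_mul_rnDeriv (κ := γ) hP,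
    Measure.rnDeriv_mul_rnDeriv (κ := γ) hQ] with x hPx hQx
  rw [← hPx, ← hQx, Pi.mul_apply, Pi.mul_apply, ENNReal.toReal_mul, ENNReal.toReal_mul, ← sub_mul,
    abs_mul, abs_of_nonneg ENNReal.toReal_nonneg, smul_eq_mul, mul_comm]

theorem integral_norm_toReal_rnDeriv {P ν : Measure α} [SigmaFinite P] [SigmaFinite ν]
    (hP : P ≪ ν) : ∫ x, ‖(P.rnDeriv ν x).toReal‖ ∂ν = P.real Set.univ := by
  simp only [Real.norm_of_nonneg ENNReal.toReal_nonneg, Measure.integral_toReal_rnDeriv hP]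

theorem densityDist_pi_le {ι : Type*} [Fintype ι] {X : ι → Type*} [∀ i, MeasurableSpace (X i)]
    {γ P Q : ∀ i, Measure (X i)} [∀ i, SigmaFinite (γ i)] [∀ i, IsProbabilityMeasure (P i)]
    [∀ i, IsProbabilityMeasure (Q i)] (hP : ∀ i, P i ≪ γ i) (hQ : ∀ i, Q i ≪ γ i) :
    densityDist (Measure.pi γ) (Measure.pi P) (Measure.pi Q) ≤
      ∑ i, densityDist (γ i) (P i) (Q i) := by
  calc densityDist (Measure.pi γ) (Measure.pi P) (Measure.pi Q)
      = ∫ x, ‖∏ i, ((P i).rnDeriv (γ i) (x i)).toReal - ∏ i, ((Q i).rnDeriv (γ i) (x i)).toReal‖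
          ∂Measure.pi γ := by
        refine integral_congr_ae ?_
        filter_upwards [rnDeriv_pi hP, rnDeriv_pi hQ] with x hPx hQx
        rw [hPx, hQx, ENNReal.toReal_prod, ENNReal.toReal_prod, Real.norm_eq_abs]
    _ ≤ ∑ i, densityDist (γ i) (P i) (Q i) :=
        integral_norm_prod_sub_prod_le (f := fun i x => ((P i).rnDeriv (γ i) x).toReal)
          (g := fun i x => ((Q i).rnDeriv (γ i) x).toReal)
          (fun _ => Measure.integrable_toReal_rnDeriv) (fun _ => Measure.integrable_toReal_rnDeriv)
          (fun i => ((integral_norm_toReal_rnDeriv (hP i)).trans probReal_univ).le)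
          fun i => ((integral_norm_toReal_rnDeriv (hQ i)).trans probReal_univ).le

end DensityDistance

instance isProbabilityMeasure_stdGaussian : IsProbabilityMeasure (stdGaussian d) := by
  unfold stdGaussian; infer_instance

theorem volume_absolutelyContinuous_stdGaussian :
    (volume : Measure (RV d)) ≪ stdGaussian d :=
  absolutelyContinuous_pi fun _ => gaussianReal_absolutelyContinuous' 0 one_ne_zero

theorem measurable_prefixMap (t : ℕ) : Measurable (prefixMap d t) :=
  measurable_pi_lambda _ fun s => measurable_pi_apply (s : ℕ)

variable {d}

theorem subset_fconv (Γ : Measure (Seq d)) (𝔓 : Set (Measure (Seq d))) : 𝔓 ⊆ fconv d Γ 𝔓 :=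
  Set.subset_sInter fun _ hS => hS.1

theorem integral_abs_Z_sub_eq_densityDist (Γ μ ν : Measure (Seq d)) (t : ℕ) :
    ∫ ω, |Z d μ Γ t ω - Z d ν Γ t ω| ∂Γ =
      densityDist (prefixLaw d Γ t) (prefixLaw d μ t) (prefixLaw d ν t) := by
  have hmeas : Measurable fun x =>
      |((prefixLaw d μ t).rnDeriv (prefixLaw d Γ t) x).toReal -
        ((prefixLaw d ν t).rnDeriv (prefixLaw d Γ t) x).toReal| := by fun_prop
  exact (integral_map (measurable_prefixMap d t).aemeasurable hmeas.aestronglyMeasurable).symm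

theorem isProductLaw_infinitePi (Ps : ℕ → Measure (RV d)) [∀ t, IsProbabilityMeasure (Ps t)] :
    IsProductLaw d (Measure.infinitePi Ps) Ps := by
  refine ⟨inferInstance, fun t A _ => ?_⟩
  have hindep : iIndepFun (fun (s : Fin t) (ω : Seq d) => ω s) (Measure.infinitePi Ps) :=
    (iIndepFun_infinitePi fun _ => measurable_id).precomp Fin.val_injective
  have hprefix : prefixLaw d (Measure.infinitePi Ps) t =
      Measure.pi fun s : Fin t => (Measure.infinitePi Ps).map fun ω => ω s :=
    (iIndepFun_iff_map_fun_eq_pi_map fun s => (measurable_pi_apply _).aemeasurable).mp hindep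
  simp only [hprefix, Measure.infinitePi_map_eval, Measure.pi_pi]

namespace IsProductLaw

variable {Γ μ ν : Measure (Seq d)} {γs Ps Qs : ℕ → Measure (RV d)}
  [∀ t, IsProbabilityMeasure (γs t)] [∀ t, IsProbabilityMeasure (Ps t)]
  [∀ t, IsProbabilityMeasure (Qs t)]

theorem prefixLaw_eq_pi (hμ : IsProductLaw d μ Ps) (t : ℕ) :
    prefixLaw d μ t = Measure.pi fun s : Fin t => Ps s :=
  (Measure.pi_eq (hμ.2 t)).symm

theorem locAC (hΓ : IsProductLaw d Γ γs) (hμ : IsProductLaw d μ Ps) (hPs : ∀ t, Ps t ≪ γs t) :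
    LocAC d μ Γ := by
  intro t
  rw [hμ.prefixLaw_eq_pi, hΓ.prefixLaw_eq_pi]
  exact absolutelyContinuous_pi fun s => hPs s

theorem integral_abs_Z_sub_le (hΓ : IsProductLaw d Γ γs) (hμ : IsProductLaw d μ Ps)
    (hν : IsProductLaw d ν Qs) (hPs : ∀ t, Ps t ≪ γs t) (hQs : ∀ t, Qs t ≪ γs t) (t : ℕ) :
    ∫ ω, |Z d μ Γ t ω - Z d ν Γ t ω| ∂Γ ≤ ∑ s : Fin t, densityDist (γs s) (Ps s) (Qs s) := by
  rw [integral_abs_Z_sub_eq_densityDist, hμ.prefixLaw_eq_pi, hν.prefixLaw_eq_pi,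
    hΓ.prefixLaw_eq_pi]
  exact densityDist_pi_le (fun s => hPs s) fun s => hQs s

theorem tendstoLocL1 {μn : ℕ → Measure (Seq d)} {Pn : ℕ → ℕ → Measure (RV d)}
    [∀ n t, IsProbabilityMeasure (Pn n t)] (hΓ : IsProductLaw d Γ γs)
    (hμn : ∀ n, IsProductLaw d (μn n) (Pn n)) (hμ : IsProductLaw d μ Ps)
    (hPn : ∀ n t, Pn n t ≪ γs t) (hPs : ∀ t, Ps t ≪ γs t)
    (hlim : ∀ t, Tendsto (fun n => densityDist (γs t) (Pn n t) (Ps t)) atTop (nhds 0)) :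
    TendstoLocL1 d Γ μn μ := by
  intro t
  refine squeeze_zero (fun n => integral_nonneg fun ω => abs_nonneg _)
    (fun n => integral_abs_Z_sub_le hΓ (hμn n) hμ (hPn n) hPs t) ?_
  simpa only [Finset.sum_const_zero] using
    tendsto_finsetSum Finset.univ fun s : Fin t => fun _ => hlim s

end IsProductLaw

theorem statement7_general {Γ : Measure (Seq d)} {γs : ℕ → Measure (RV d)}
    [∀ t, IsProbabilityMeasure (γs t)] (hΓ : IsProductLaw d Γ γs)
    (hγs : ∀ t, (volume : Measure (RV d)) ≪ γs t) {PP : Set (Measure (RV d))}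
    (hdens : ∀ P ∈ PP, IsProbabilityMeasure P ∧ P ≪ (volume : Measure (RV d))) :
    productLaws d (L1closure d PP) ⊆ clfconv d Γ (productLaws d PP) := by
  rintro μ ⟨Qs, hQs, hμ⟩
  choose hQs_prob hQs_ac Pn hPn hlim using hQs
  have (n t : ℕ) : IsProbabilityMeasure (Pn t n) := (hdens _ (hPn t n)).1
  have hPn_ac (n t : ℕ) : Pn t n ≪ volume := (hdens _ (hPn t n)).2
  have hμn (n : ℕ) := isProductLaw_infinitePi fun t => Pn t n
  refine ⟨hμ.1, hΓ.locAC hμ fun t => (hQs_ac t).trans (hγs t), _,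
    fun n => subset_fconv _ _ ⟨_, fun t => hPn t n, hμn n⟩,
    hΓ.tendstoLocL1 hμn hμ (fun n t => (hPn_ac n t).trans (hγs t))
      (fun t => (hQs_ac t).trans (hγs t)) fun t => ?_⟩
  simp only [densityDist_eq_of_absolutelyContinuous (hPn_ac _ t) (hQs_ac t) (hγs t)]
  exact hlim t

variable (d)

/-- For a family `PP` of laws with a.e. strictly positive Lebesgue densities,
the closed fork-convex hull of the product laws over `PP` contains the product laws over the
`L¹` closure of `PP`. -/
theorem statement7 (Γ : Measure (Seq d)) (hΓ : IsGamma d Γ)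
    (PP : Set (Measure (RV d)))
    (hdens : ∀ P ∈ PP, IsProbabilityMeasure P ∧ P ≪ (volume : Measure (RV d)))
    (hpos : ∀ P ∈ PP, ∀ᵐ x ∂(volume : Measure (RV d)), 0 < P.rnDeriv volume x) :
    productLaws d (L1closure d PP) ⊆ clfconv d Γ (productLaws d PP) := by
  exact statement7_general (γs := fun _ => stdGaussian d) hΓ
    (fun _ => volume_absolutelyContinuous_stdGaussian d) hdens

end SeqTest
end
end

section
/- Finite mixtures of nondegenerate Gaussian densities are dense in L¹ among all probability densities on ℝ^d: for every probability density f on ℝ^d (with respect to Lebesgue measure) and every ε > 0, there exist k ∈ ℕ, weights α_1,…,α_k ≥ 0 with Σα_i = 1, means μ_i ∈ ℝ^d, and positive-definite covariance matrices Σ_i such that ∫_{ℝ^d} | f(x) − Σ_{i=1}^k α_i φ_{μ_i,Σ_i}(x) | dx ≤ ε, where φ_{μ,Σ} denotes the Gaussian density with mean μ and covariance Σ. -/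
open MeasureTheory Matrix

noncomputable section

/-- The density of the `d`-dimensional Gaussian with mean `m` and positive-definite
covariance matrix `S`. -/
def gaussDensityFn (d : ℕ) (m : Fin d → ℝ) (S : Matrix (Fin d) (Fin d) ℝ)
    (x : Fin d → ℝ) : ℝ :=
  (2 * Real.pi) ^ (-(d : ℝ) / 2) * S.det ^ (-(1 : ℝ) / 2) *
    Real.exp (-(1 / 2) * ((x - m) ⬝ᵥ (S⁻¹ *ᵥ (x - m))))

open Filter Module Topology
open scoped ENNReal

/-! Averages `x ↦ ∫ y, w y • h (x - u y) ∂ν` of translates of an integrable function `h`, with an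
integrable weight `w`, depend continuously in `L¹` on the family of translations `u`: translation
is continuous in `L¹`, and `2 |w y| ‖h‖₁` is an integrable bound. This is used twice.

Averaging the translates `f (x - σ • z)` with weight `φ z` and letting `σ → 0` shows that smoothing
`f` with a narrow kernel changes it little. The smoothed function is also an average of translates
`K (x - y)` of the narrow kernel `K` with weight `f y`; replacing `y` by a simple function `T y`
close to `y` turns this average into a finite mixture whose weights are the integrals of `f` over
the fibers of `T`, so that positivity and total mass of the weights are inherited from `f`. For the
standard Gaussian `φ`, the translates of `K` are the Gaussian densities with covariance
`σ ^ 2 • 1`. -/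

theorem eLpNorm_one_integral_le_lintegral_eLpNorm_one {X Y F : Type*} [MeasurableSpace X]
    [MeasurableSpace Y] [NormedAddCommGroup F] [NormedSpace ℝ F] {μ : Measure X} {ν : Measure Y}
    [SFinite μ] [SFinite ν] {g : Y → X → F}
    (hg : AEStronglyMeasurable (Function.uncurry g) (ν.prod μ)) :
    eLpNorm (fun x => ∫ y, g y x ∂ν) 1 μ ≤ ∫⁻ y, eLpNorm (g y) 1 μ ∂ν := by
  simp only [eLpNorm_one_eq_lintegral_enorm]
  calc ∫⁻ x, ‖∫ y, g y x ∂ν‖ₑ ∂μ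
      ≤ ∫⁻ x, ∫⁻ y, ‖g y x‖ₑ ∂ν ∂μ := lintegral_mono fun x => enorm_integral_le_lintegral_enorm _
    _ = ∫⁻ y, ∫⁻ x, ‖g y x‖ₑ ∂μ ∂ν := (lintegral_lintegral_swap hg.enorm).symm

theorem integral_smul_comp_simpleFunc {Y Z F : Type*} [MeasurableSpace Y] [NormedAddCommGroup F]
    [NormedSpace ℝ F] [CompleteSpace F] {ν : Measure Y} {w : Y → ℝ} (hw : Integrable w ν)
    (T : SimpleFunc Y Z) (g : Z → F) :
    ∫ y, w y • g (T y) ∂ν = ∑ z ∈ T.range, (∫ y in T ⁻¹' {z}, w y ∂ν) • g z := by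
  have hfiber (z : Z) : Set.EqOn (fun y => w y • g (T y)) (fun y => w y • g z) (T ⁻¹' {z}) :=
    fun y hy => by rw [Set.mem_preimage, Set.mem_singleton_iff] at hy; simp only [hy]
  have hcover : ⋃ z ∈ T.range, T ⁻¹' {z} = Set.univ := by ext; simp
  rw [← setIntegral_univ, ← hcover, integral_biUnion_finset _ fun z _ => T.measurableSet_fiber z]
  · refine Finset.sum_congr rfl fun z _ => ?_
    rw [setIntegral_congr_fun (T.measurableSet_fiber z) (hfiber z), integral_smul_const]
  · exact fun z _ z' _ hne => (Set.disjoint_singleton.2 hne).preimage T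
  · exact fun z _ => IntegrableOn.congr_fun (hw.integrableOn.smul_const (g z)) (hfiber z).symm
      (T.measurableSet_fiber z)

section Translate

variable {G F : Type*} [AddCommGroup G] [MeasurableSpace G] {μ : Measure G}
  [μ.IsAddLeftInvariant] [NormedAddCommGroup F] {p : ℝ≥0∞} {h : G → F}

theorem eLpNorm_translate_sub_translate_le [MeasurableAdd G] (hp : 1 ≤ p)
    (hh : AEStronglyMeasurable h μ) (u v : G) :
    eLpNorm (fun x => h (x - v) - h (x - u)) p μ ≤ 2 * eLpNorm h p μ := by
  have hpres (t : G) : MeasurePreserving (· - t) μ μ := measurePreserving_sub_right μ t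
  have hnorm (t : G) : eLpNorm (fun x => h (x - t)) p μ = eLpNorm h p μ :=
    eLpNorm_comp_measurePreserving hh (hpres t)
  calc eLpNorm (fun x => h (x - v) - h (x - u)) p μ
      ≤ eLpNorm (fun x => h (x - v)) p μ + eLpNorm (fun x => h (x - u)) p μ :=
        eLpNorm_sub_le (hh.comp_measurePreserving (hpres v))
          (hh.comp_measurePreserving (hpres u)) hp
    _ = 2 * eLpNorm h p μ := by rw [hnorm, hnorm, two_mul]

theorem tendsto_eLpNorm_translate_sub_translate [TopologicalSpace G] [IsTopologicalAddGroup G]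
    [BorelSpace G] [IsLocallyFiniteMeasure μ] [μ.InnerRegularCompactLTTop]
    (hp₁ : 1 ≤ p) (hp : p ≠ ∞) (hh : MemLp h p μ) (u : G) :
    Tendsto (fun v => eLpNorm (fun x => h (x - v) - h (x - u)) p μ) (𝓝 u) (𝓝 0) := by
  have : Fact (1 ≤ p) := ⟨hp₁⟩
  have : Fact (p ≠ ∞) := ⟨hp⟩
  -- `v ↦ h (· - v)` is an orbit map of the continuous action of `G` on `Lᵖ` by translations.
  have hcont : Continuous fun v : G => DomAddAct.mk (-v) +ᵥ hh.toLp h :=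
    (DomAddAct.continuous_mk.comp continuous_neg).vadd continuous_const
  have hedist := (hcont.tendsto u).edist (tendsto_const_nhds (x := DomAddAct.mk (-u) +ᵥ hh.toLp h))
  rw [edist_self] at hedist
  refine hedist.congr fun v => ?_
  rw [DomAddAct.mk_vadd_toLp, DomAddAct.mk_vadd_toLp, Lp.edist_toLp_toLp]
  simp only [vadd_eq_add, neg_add_eq_sub, Pi.sub_def]

end Translate

section TranslateAverage

variable {G Y F : Type*} [MeasurableSpace G] [MeasurableSpace Y] {μ : Measure G} {ν : Measure Y}
  [SFinite ν] [NormedAddCommGroup F] [NormedSpace ℝ F] {w : Y → ℝ} {h : G → F}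

theorem integrable_prod_smul_translate [AddGroup G] [MeasurableAdd G] [MeasurableSub₂ G] [SFinite μ]
    [μ.IsAddRightInvariant] (hw : Integrable w ν) (hh : Integrable h μ) {u : Y → G}
    (hu : Measurable u) :
    Integrable (fun q : Y × G => w q.1 • h (q.2 - u q.1)) (ν.prod μ) := by
  have hshear : MeasurePreserving (fun q : Y × G => (q.1, q.2 - u q.1)) (ν.prod μ) (ν.prod μ) :=
    (MeasurePreserving.id ν).skew_product (g := fun y x => x - u y) (by fun_prop)
      (.of_forall fun y => (measurePreserving_sub_right μ (u y)).map_eq)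
  exact hshear.integrable_comp_of_integrable (hw.smul_prod hh)

variable [AddCommGroup G] [TopologicalSpace G] [IsTopologicalAddGroup G] [BorelSpace G]
  [SecondCountableTopology G] [IsLocallyFiniteMeasure μ] [μ.InnerRegularCompactLTTop]
  [μ.IsAddLeftInvariant] {ι : Type*} {l : Filter ι} [l.IsCountablyGenerated]
  {v : ι → Y → G} {u : Y → G}

theorem tendsto_lintegral_eLpNorm_smul_translate_sub (hw : Integrable w ν) (hh : Integrable h μ)
    (hv : ∀ i, Measurable (v i)) (hu : Measurable u)
    (hvu : ∀ y, Tendsto (fun i => v i y) l (𝓝 (u y))) :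
    Tendsto
      (fun i => ∫⁻ y, eLpNorm (fun x => w y • h (x - v i y) - w y • h (x - u y)) 1 μ ∂ν)
      l (𝓝 0) := by
  have hfactor (i : ι) (y : Y) :
      eLpNorm (fun x => w y • h (x - v i y) - w y • h (x - u y)) 1 μ =
        ‖w y‖ₑ * eLpNorm (fun x => h (x - v i y) - h (x - u y)) 1 μ := by
    simp_rw [← smul_sub]
    exact eLpNorm_const_smul (w y) _ 1 μ
  rw [← lintegral_zero (μ := ν)]
  refine tendsto_lintegral_filter_of_dominated_convergence'
    (fun y => ‖w y‖ₑ * (2 * eLpNorm h 1 μ)) (.of_forall fun i => ?_)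
    (.of_forall fun i => .of_forall fun y => ?_) ?_ (.of_forall fun y => ?_)
  · simp only [eLpNorm_one_eq_lintegral_enorm]
    exact ((integrable_prod_smul_translate hw hh (hv i)).sub
      (integrable_prod_smul_translate hw hh hu)).aestronglyMeasurable.enorm.lintegral_prod_right'
  · rw [hfactor]
    gcongr
    exact eLpNorm_translate_sub_translate_le le_rfl hh.aestronglyMeasurable (u y) (v i y)
  · have hfin : eLpNorm h 1 μ ≠ ∞ := (memLp_one_iff_integrable.2 hh).eLpNorm_ne_top
    rw [lintegral_mul_const'' _ hw.aestronglyMeasurable.enorm]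
    exact ENNReal.mul_ne_top hw.hasFiniteIntegral.ne (ENNReal.mul_ne_top ENNReal.ofNat_ne_top hfin)
  · simp only [hfactor]
    have htranslate := (tendsto_eLpNorm_translate_sub_translate le_rfl
      ENNReal.one_ne_top (memLp_one_iff_integrable.2 hh) (u y)).comp (hvu y)
    simpa only [mul_zero, Function.comp_def] using
      ENNReal.Tendsto.const_mul htranslate (.inr enorm_ne_top)

theorem tendsto_eLpNorm_integral_smul_translate_sub (hw : Integrable w ν) (hh : Integrable h μ)
    (hv : ∀ i, Measurable (v i)) (hu : Measurable u)
    (hvu : ∀ y, Tendsto (fun i => v i y) l (𝓝 (u y))) :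
    Tendsto (fun i => eLpNorm
      (fun x => ∫ y, w y • h (x - v i y) ∂ν - ∫ y, w y • h (x - u y) ∂ν) 1 μ) l (𝓝 0) := by
  have hint {t : Y → G} (ht : Measurable t) := integrable_prod_smul_translate hw hh ht
  refine tendsto_of_tendsto_of_tendsto_of_le_of_le tendsto_const_nhds
    (tendsto_lintegral_eLpNorm_smul_translate_sub hw hh hv hu hvu) (fun _ => zero_le) fun i => ?_
  refine le_of_eq_of_le (eLpNorm_congr_ae ?_) (eLpNorm_one_integral_le_lintegral_eLpNorm_one
    ((hint (hv i)).sub (hint hu)).aestronglyMeasurable)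
  filter_upwards [(hint (hv i)).prod_left_ae, (hint hu).prod_left_ae] with x hx₁ hx₂
  exact (integral_sub hx₁ hx₂).symm

end TranslateAverage

theorem exists_simpleFunc_eLpNorm_sum_smul_translate_sub_le {G F : Type*} [NormedAddCommGroup G]
    [SecondCountableTopology G] [MeasurableSpace G] [BorelSpace G] {μ ν : Measure G} [SFinite ν]
    [IsLocallyFiniteMeasure μ] [μ.InnerRegularCompactLTTop] [μ.IsAddLeftInvariant]
    [NormedAddCommGroup F] [NormedSpace ℝ F] [CompleteSpace F] {w : G → ℝ} {h : G → F}
    (hw : Integrable w ν) (hh : Integrable h μ) {ε : ℝ≥0∞} (hε : ε ≠ 0) :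
    ∃ T : SimpleFunc G G, eLpNorm (fun x => ∑ m ∈ T.range, (∫ y in T ⁻¹' {m}, w y ∂ν) • h (x - m) -
      ∫ y, w y • h (x - y) ∂ν) 1 μ ≤ ε := by
  let T := SimpleFunc.approxOn (id : G → G) measurable_id Set.univ 0 trivial
  have hT (y : G) : Tendsto (fun n => T n y) atTop (𝓝 y) :=
    SimpleFunc.tendsto_approxOn measurable_id (Set.mem_univ 0) (by simp)
  have hlim := tendsto_eLpNorm_integral_smul_translate_sub hw hh
    (fun n => (T n).measurable) measurable_id hT
  obtain ⟨n, hn⟩ := (hlim.eventually_le_const hε.bot_lt).exists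
  refine ⟨T n, ?_⟩
  have hsum (x : G) := integral_smul_comp_simpleFunc hw (T n) fun m => h (x - m)
  simpa only [hsum, id_eq] using hn

/-- The location-scale rescaling of a kernel: if `φ` is the probability density of a random vector
`Z` and `0 < σ`, then `x ↦ scaledKernel φ σ (x - m)` is the density of `m + σ • Z`. -/
def scaledKernel {E : Type*} [AddCommGroup E] [Module ℝ E] (φ : E → ℝ) (σ : ℝ) (x : E) : ℝ :=
  (σ ^ finrank ℝ E)⁻¹ * φ (σ⁻¹ • x)

section Mixture

variable {E : Type*} [NormedAddCommGroup E] [NormedSpace ℝ E] [FiniteDimensional ℝ E]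
  [MeasurableSpace E] [BorelSpace E] {μ : Measure E} [μ.IsAddHaarMeasure] {φ f : E → ℝ}

theorem integrable_scaledKernel (hφ : Integrable φ μ) {σ : ℝ} (hσ : σ ≠ 0) :
    Integrable (scaledKernel φ σ) μ :=
  (hφ.comp_smul (inv_ne_zero hσ)).const_mul _

theorem integral_mul_scaledKernel_sub {σ : ℝ} (hσ : 0 < σ) (x : E) :
    ∫ y, f y * scaledKernel φ σ (x - y) ∂μ = ∫ z, φ z * f (x - σ • z) ∂μ := by
  calc ∫ y, f y * scaledKernel φ σ (x - y) ∂μ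
      = ∫ y, f (x - y) * scaledKernel φ σ y ∂μ := by
        rw [← integral_sub_left_eq_self _ μ x]
        simp only [sub_sub_cancel]
    _ = ∫ y, (σ ^ finrank ℝ E)⁻¹ * (φ (σ⁻¹ • y) * f (x - σ • σ⁻¹ • y)) ∂μ := by
        simp only [scaledKernel, smul_inv_smul₀ hσ.ne']
        congr! 2 with y
        ring
    _ = ∫ z, φ z * f (x - σ • z) ∂μ := by
        rw [integral_const_mul, Measure.integral_comp_inv_smul_of_nonneg μ
          (fun z => φ z * f (x - σ • z)) hσ.le, smul_eq_mul, inv_mul_cancel_left₀ (by positivity)]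

theorem tendsto_eLpNorm_integral_mul_scaledKernel_sub (hφ : ∫ x, φ x ∂μ = 1)
    (hf : Integrable f μ) :
    Tendsto (fun σ => eLpNorm (fun x => ∫ y, f y * scaledKernel φ σ (x - y) ∂μ - f x) 1 μ)
      (𝓝[>] 0) (𝓝 0) := by
  have hφi : Integrable φ μ := .of_integral_ne_zero (by simp [hφ])
  have hshift (z : E) : Tendsto (fun σ : ℝ => σ • z) (𝓝[>] 0) (𝓝 0) :=
    (Continuous.tendsto' (by fun_prop) 0 0 (zero_smul ℝ z)).mono_left nhdsWithin_le_nhds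
  refine (tendsto_eLpNorm_integral_smul_translate_sub hφi hf
    (fun σ => measurable_const_smul σ) measurable_const hshift).congr' ?_
  filter_upwards [self_mem_nhdsWithin] with σ hσ
  simp only [smul_eq_mul, sub_zero, integral_mul_const, hφ, one_mul,
    integral_mul_scaledKernel_sub (Set.mem_Ioi.1 hσ)]

theorem exists_simpleFunc_eLpNorm_sub_sum_scaledKernel_le (hφ : ∫ x, φ x ∂μ = 1)
    (hf : Integrable f μ) {ε : ℝ≥0∞} (hε : ε ≠ 0) :
    ∃ σ > 0, ∃ T : SimpleFunc E E, eLpNorm (fun x =>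
      f x - ∑ m ∈ T.range, (∫ y in T ⁻¹' {m}, f y ∂μ) * scaledKernel φ σ (x - m)) 1 μ ≤ ε := by
  have hhalf : ε / 2 ≠ 0 := (ENNReal.half_pos hε).ne'
  obtain ⟨σ, hsmooth, hσ⟩ := ((tendsto_eLpNorm_integral_mul_scaledKernel_sub hφ hf
    |>.eventually_le_const hhalf.bot_lt).and self_mem_nhdsWithin).exists
  have hK : Integrable (scaledKernel φ σ) μ :=
    integrable_scaledKernel (.of_integral_ne_zero (by simp [hφ])) (Set.mem_Ioi.1 hσ).ne'
  obtain ⟨T, hT⟩ := exists_simpleFunc_eLpNorm_sum_smul_translate_sub_le hf hK hhalf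
  refine ⟨σ, hσ, T, ?_⟩
  set smoothed : E → ℝ := fun x => ∫ y, f y * scaledKernel φ σ (x - y) ∂μ
  set mixture : E → ℝ :=
    fun x => ∑ m ∈ T.range, (∫ y in T ⁻¹' {m}, f y ∂μ) * scaledKernel φ σ (x - m)
  have hsmoothed : Integrable smoothed μ :=
    (integrable_prod_smul_translate hf hK measurable_id).integral_prod_right
  have hmixture : Integrable mixture μ :=
    integrable_finsetSum _ fun m _ => (hK.comp_sub_right m).const_mul _
  calc eLpNorm (f - mixture) 1 μ
      = eLpNorm ((f - smoothed) + (smoothed - mixture)) 1 μ := by rw [sub_add_sub_cancel]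
    _ ≤ eLpNorm (f - smoothed) 1 μ + eLpNorm (smoothed - mixture) 1 μ :=
      eLpNorm_add_le (hf.sub hsmoothed).aestronglyMeasurable
        (hsmoothed.sub hmixture).aestronglyMeasurable le_rfl
    _ ≤ ε / 2 + ε / 2 := by
      rw [eLpNorm_sub_comm f smoothed, eLpNorm_sub_comm smoothed mixture]
      exact add_le_add hsmooth hT
    _ = ε := ENNReal.add_halves ε

theorem statement8_general (hφ : ∫ x, φ x ∂μ = 1) (hf_nonneg : 0 ≤ᵐ[μ] f)
    (hf_int : ∫ x, f x ∂μ = 1) {ε : ℝ} (hε : 0 < ε) :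
    ∃ σ > 0, ∃ (k : ℕ) (α : Fin k → ℝ) (ms : Fin k → E),
      (∀ i, 0 ≤ α i) ∧ (∑ i, α i = 1) ∧
      ∫ x, |f x - ∑ i, α i * scaledKernel φ σ (x - ms i)| ∂μ ≤ ε := by
  have hf : Integrable f μ := .of_integral_ne_zero (by simp [hf_int])
  obtain ⟨σ, hσ, T, hT⟩ := exists_simpleFunc_eLpNorm_sub_sum_scaledKernel_le hφ hf
    (ENNReal.ofReal_pos.2 hε).ne'
  have hK : Integrable (scaledKernel φ σ) μ :=
    integrable_scaledKernel (.of_integral_ne_zero (by simp [hφ])) hσ.ne'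
  let e := T.range.equivFin
  have hreindex (g : E → ℝ) : ∑ i, g (e.symm i) = ∑ m ∈ T.range, g m := by
    rw [← Finset.sum_coe_sort T.range, e.symm.sum_comp fun m : T.range => g m]
  refine ⟨σ, hσ, T.range.card, fun i => ∫ y in T ⁻¹' {(e.symm i : E)}, f y ∂μ,
    fun i => e.symm i, fun i => ?_, ?_, ?_⟩
  · exact integral_nonneg_of_ae (ae_restrict_of_ae hf_nonneg)
  · rw [hreindex fun m => ∫ y in T ⁻¹' {m}, f y ∂μ, ← hf_int]
    simpa using (integral_smul_comp_simpleFunc hf T fun _ => (1 : ℝ)).symm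
  · have hmix (x : E) := hreindex fun m => (∫ y in T ⁻¹' {m}, f y ∂μ) * scaledKernel φ σ (x - m)
    have hdiff : Integrable (fun x => f x - ∑ m ∈ T.range,
        (∫ y in T ⁻¹' {m}, f y ∂μ) * scaledKernel φ σ (x - m)) μ :=
      hf.sub (integrable_finsetSum _ fun m _ => (hK.comp_sub_right m).const_mul _)
    simp_rw [hmix, ← Real.norm_eq_abs]
    rw [integral_norm_eq_lintegral_enorm hdiff.aestronglyMeasurable,
      ← eLpNorm_one_eq_lintegral_enorm]
    exact ENNReal.toReal_le_of_le_ofReal hε.le hT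

end Mixture

section Gaussian

variable {d : ℕ}

theorem gaussDensityFn_sq_smul_one (m x : Fin d → ℝ) {σ : ℝ} (hσ : 0 < σ) :
    gaussDensityFn d m (σ ^ 2 • 1) x = scaledKernel (gaussDensityFn d 0 1) σ (x - m) := by
  have hinv : (σ ^ 2 • (1 : Matrix (Fin d) (Fin d) ℝ))⁻¹ = (σ⁻¹ * σ⁻¹) • 1 := by
    refine Matrix.inv_eq_right_inv ?_
    rw [smul_mul_smul_comm, mul_one, ← mul_inv, ← sq, mul_inv_cancel₀ (by positivity), one_smul]
  have hdet : (σ ^ 2 • (1 : Matrix (Fin d) (Fin d) ℝ)).det ^ (-(1 : ℝ) / 2) = (σ ^ d)⁻¹ := by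
    rw [Matrix.det_smul, Matrix.det_one, mul_one, Fintype.card_fin, ← pow_mul, mul_comm 2 d,
      pow_mul, neg_div, Real.rpow_neg (by positivity), ← Real.sqrt_eq_rpow,
      Real.sqrt_sq (by positivity)]
  rw [gaussDensityFn, scaledKernel, gaussDensityFn, hinv, hdet, finrank_fin_fun]
  simp only [Matrix.smul_mulVec, Matrix.one_mulVec, inv_one, Matrix.det_one, Real.one_rpow,
    dotProduct_smul, smul_dotProduct, sub_zero, smul_eq_mul]
  ring_nf

theorem gaussDensityFn_zero_one (x : Fin d → ℝ) :
    gaussDensityFn d 0 1 x = ∏ i, ProbabilityTheory.gaussianPDFReal 0 1 (x i) := by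
  have hconst : (2 * Real.pi) ^ (-(d : ℝ) / 2) = ((√(2 * Real.pi))⁻¹) ^ d := by
    rw [Real.sqrt_eq_rpow, ← Real.rpow_neg (by positivity), ← Real.rpow_mul_natCast (by positivity)]
    ring_nf
  simp only [gaussDensityFn, ProbabilityTheory.gaussianPDFReal, Finset.prod_mul_distrib,
    Finset.prod_const, ← Real.exp_sum, Finset.card_univ, Fintype.card_fin, hconst, inv_one,
    Matrix.one_mulVec, Matrix.det_one, Real.one_rpow, mul_one, sub_zero, NNReal.coe_one,
    dotProduct, Finset.mul_sum]
  ring_nf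

theorem integral_gaussDensityFn_zero_one : ∫ x, gaussDensityFn d 0 1 x = 1 := by
  simp_rw [gaussDensityFn_zero_one]
  rw [integral_fintype_prod_volume_eq_prod fun _ : Fin d => ProbabilityTheory.gaussianPDFReal 0 1]
  simp only [ProbabilityTheory.integral_gaussianPDFReal_eq_one 0 one_ne_zero, Finset.prod_const_one]

end Gaussian

/-- Finite mixtures of nondegenerate Gaussian densities are dense in `L¹`
among all probability densities on `ℝ^d`. -/
theorem statement8 (d : ℕ) (f : (Fin d → ℝ) → ℝ) (hf_meas : Measurable f)
    (hf_nonneg : ∀ x, 0 ≤ f x) (hf_int : ∫ x, f x = 1) (ε : ℝ) (hε : 0 < ε) :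
    ∃ (k : ℕ) (α : Fin k → ℝ) (ms : Fin k → Fin d → ℝ)
      (Ss : Fin k → Matrix (Fin d) (Fin d) ℝ),
      (∀ i, 0 ≤ α i) ∧ (∑ i, α i = 1) ∧ (∀ i, (Ss i).PosDef) ∧
      ∫ x, |f x - ∑ i, α i * gaussDensityFn d (ms i) (Ss i) x| ≤ ε := by
  obtain ⟨σ, hσ, k, α, ms, hα, hsum, hclose⟩ := statement8_general
    integral_gaussDensityFn_zero_one (.of_forall hf_nonneg) hf_int hε
  refine ⟨k, α, ms, fun _ => σ ^ 2 • 1, hα, hsum, fun _ => .smul .one (by positivity), ?_⟩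
  simpa only [gaussDensityFn_sq_smul_one _ _ hσ] using hclose
end
end

section
/- Let {M_t} be a nonnegative adapted process on Ω that is a nonnegative supermartingale simultaneously for every independent-product law in ⨂𝒟 (every law of an independent sequence whose marginals have Lebesgue densities). Then {M_t} is 𝚪-almost surely nonincreasing: 𝚪(∃ t ≥ 1 : M_t > M_{t−1}) = 0. If moreover {M_t} is a nonnegative martingale for every law in ⨂𝒟, then 𝚪(∃ t ≥ 1 : M_t ≠ M_{t−1}) = 0. -/
open MeasureTheory ProbabilityTheory Filter Finset Matrix
open scoped Classical

noncomputable section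

namespace SeqTest

variable (d : ℕ)


/-! Conditioning an independent sequence on an event `{X_t ∈ B}` only replaces the marginal `P_t` by
`P_t(· | B)`, which again has a density. The supermartingale inequality between times `t` and
`t + 1` under the conditioned law says, after multiplying by `P_t(B)`, that
`∫_{A ∩ {X_t ∈ B}} (M_t - M_{t+1}) ≥ 0` for every event `A` known at time `t`. The sets
`A ∩ {X_t ∈ B}` form a semiring generating `ℱ_{t+1}`, so the integral is nonnegative over every
`ℱ_{t+1}`-set; since `M_t - M_{t+1}` is `ℱ_{t+1}`-measurable, it is a.s. nonnegative. For a
martingale the same applies to `-M`. -/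

section Rectangles

variable {α : Type*} {m₁ m₂ m₀ : MeasurableSpace α} {μ : Measure α} {f : α → ℝ}

theorem setIntegral_sub_setIntegral_le (hf : Integrable f μ) {s t : Set α}
    (hs : MeasurableSet s) (ht : MeasurableSet t) :
    ∫ x in t, f x ∂μ - ∫ x in s, f x ∂μ ≤ ∫ x in symmDiff s t, ‖f x‖ ∂μ := by
  rw [← integral_indicator hs, ← integral_indicator ht, ← integral_indicator (hs.symmDiff ht),
    ← integral_sub (hf.indicator ht) (hf.indicator hs)]
  refine integral_mono ((hf.indicator ht).sub (hf.indicator hs))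
    (hf.norm.indicator (hs.symmDiff ht)) fun x => ?_
  calc t.indicator f x - s.indicator f x ≤ |(symmDiff t s).indicator f x| := by
        rw [Set.abs_indicator_symmDiff]; exact le_abs_self _
    _ = (symmDiff s t).indicator (‖f ·‖) x := by
        rw [symmDiff_comm, ← Real.norm_eq_abs, norm_indicator_eq_indicator_norm]

theorem setIntegral_nonneg_of_isSetAlgebra {𝒜 : Set (Set α)} (h𝒜 : IsSetAlgebra 𝒜)
    (hgen : m₀ = MeasurableSpace.generateFrom 𝒜) (hf : Integrable f μ)
    (hnonneg : ∀ s ∈ 𝒜, 0 ≤ ∫ x in s, f x ∂μ) {s : Set α} (hs : MeasurableSet s) :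
    0 ≤ ∫ x in s, f x ∂μ := by
  set ν := μ.withDensity (‖f ·‖ₑ)
  have : IsFiniteMeasure ν := isFiniteMeasure_withDensity hf.hasFiniteIntegral.ne
  refine le_of_forall_pos_le_add fun ε hε => ?_
  obtain ⟨t, ht, hst⟩ := (Measure.MeasureDense.of_generateFrom_isSetAlgebra_finite ν h𝒜 hgen).approx
    s hs (measure_ne_top ν s) ε hε
  have ht' : MeasurableSet t := hgen ▸ MeasurableSpace.measurableSet_generateFrom ht
  have hε' : ∫ x in symmDiff s t, ‖f x‖ ∂μ ≤ ε := by
    rw [integral_norm_eq_lintegral_enorm hf.aestronglyMeasurable.restrict,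
      ← withDensity_apply _ (hs.symmDiff ht')]
    exact ENNReal.toReal_le_of_le_ofReal hε.le hst.le
  linarith [hnonneg t ht, setIntegral_sub_setIntegral_le hf hs ht']

theorem isSetAlgebra_supClosure {C : Set (Set α)} (hC : IsSetSemiring C) (huniv : Set.univ ∈ C) :
    IsSetAlgebra (supClosure C) where
  empty_mem := hC.isSetRing_supClosure.empty_mem
  compl_mem s hs := by
    rw [Set.compl_eq_univ_sdiff]
    exact hC.isSetRing_supClosure.sdiff_mem (subset_supClosure huniv) hs
  union_mem := hC.isSetRing_supClosure.union_mem

theorem generateFrom_supClosure (C : Set (Set α)) :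
    MeasurableSpace.generateFrom (supClosure C) = MeasurableSpace.generateFrom C :=
  le_antisymm
    (MeasurableSpace.generateFrom_le fun _ => measurableSet_generateFrom_of_mem_supClosure)
    (MeasurableSpace.generateFrom_mono subset_supClosure)

theorem ae_nonneg_of_isSetSemiring {C : Set (Set α)} (hC : IsSetSemiring C)
    (huniv : Set.univ ∈ C) (hgen : m₀ = MeasurableSpace.generateFrom C) (hf : Integrable f μ)
    (hnonneg : ∀ s ∈ C, 0 ≤ ∫ x in s, f x ∂μ) : 0 ≤ᵐ[μ] f := by
  refine ae_nonneg_of_forall_setIntegral_nonneg hf fun s hs _ =>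
    setIntegral_nonneg_of_isSetAlgebra (isSetAlgebra_supClosure hC huniv)
      (hgen.trans (generateFrom_supClosure C).symm) hf (fun t ht => ?_) hs
  obtain ⟨P, hPC⟩ := hC.mem_supClosure_iff.1 ht
  rw [← P.sup_parts, sup_set_eq_biUnion, integral_biUnion_finset P.parts
    (fun u hu => hgen ▸ MeasurableSpace.measurableSet_generateFrom (hPC hu)) P.disjoint
    fun _ _ => hf.integrableOn]
  exact sum_nonneg fun u hu => hnonneg u (hPC hu)

theorem isSetSemiring_image2_inter :
    IsSetSemiring (Set.image2 (· ∩ ·) {A : Set α | MeasurableSet[m₁] A} {B | MeasurableSet[m₂] B})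
    where
  empty_mem := ⟨∅, @MeasurableSet.empty _ m₁, ∅, @MeasurableSet.empty _ m₂, Set.inter_empty ∅⟩
  inter_mem := by
    rintro _ ⟨A, hA, B, hB, rfl⟩ _ ⟨A', hA', B', hB', rfl⟩
    exact ⟨A ∩ A', hA.inter hA', B ∩ B', hB.inter hB', Set.inter_inter_inter_comm ..⟩
  sdiff_eq_sUnion' := by
    rintro _ ⟨A, hA, B, hB, rfl⟩ _ ⟨A', hA', B', hB', rfl⟩
    refine ⟨{(A \ A') ∩ B, (A ∩ A') ∩ (B \ B')}, ?_, ?_, ?_⟩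
    · rw [coe_pair, Set.pair_subset_iff]
      exact ⟨⟨A \ A', hA.diff hA', B, hB, rfl⟩, ⟨A ∩ A', hA.inter hA', B \ B', hB.diff hB', rfl⟩⟩
    · rw [coe_pair, Set.PairwiseDisjoint, Set.pairwise_pair_of_symm]
      exact fun _ => Set.disjoint_sdiff_inter.mono Set.inter_subset_left Set.inter_subset_left
    · ext x
      simp only [coe_pair, Set.sUnion_pair, Set.mem_union, Set.mem_sdiff, Set.mem_inter_iff]
      tauto

theorem generateFrom_image2_inter :
    MeasurableSpace.generateFrom
      (Set.image2 (· ∩ ·) {A : Set α | MeasurableSet[m₁] A} {B | MeasurableSet[m₂] B}) =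
      m₁ ⊔ m₂ := by
  refine le_antisymm (MeasurableSpace.generateFrom_le ?_) (sup_le (fun A hA => ?_) fun B hB => ?_)
  · rintro _ ⟨A, hA, B, hB, rfl⟩
    exact MeasurableSet.inter (le_sup_left (α := MeasurableSpace α) A hA)
      (le_sup_right (α := MeasurableSpace α) B hB)
  · exact MeasurableSpace.measurableSet_generateFrom ⟨A, hA, _, .univ, Set.inter_univ A⟩
  · exact MeasurableSpace.measurableSet_generateFrom ⟨_, .univ, B, hB, Set.univ_inter B⟩

theorem ae_nonneg_of_forall_setIntegral_inter_nonneg (hm₁ : m₁ ≤ m₀) (hm₂ : m₂ ≤ m₀)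
    (hfm : StronglyMeasurable[m₁ ⊔ m₂] f) (hf : Integrable f μ)
    (hnonneg : ∀ A B, MeasurableSet[m₁] A → MeasurableSet[m₂] B → 0 ≤ ∫ x in A ∩ B, f x ∂μ) :
    0 ≤ᵐ[μ] f := by
  have hm : m₁ ⊔ m₂ ≤ m₀ := sup_le hm₁ hm₂
  refine ae_le_of_ae_le_trim (hm := hm) (ae_nonneg_of_isSetSemiring isSetSemiring_image2_inter
    ⟨_, .univ, _, .univ, Set.univ_inter _⟩ generateFrom_image2_inter.symm
    (Integrable.trim hm hf hfm) ?_)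
  rintro _ ⟨A, hA, B, hB, rfl⟩
  rw [← setIntegral_trim hm hfm]
  · exact hnonneg A B hA hB
  · exact MeasurableSet.inter (le_sup_left (α := MeasurableSpace α) A hA)
      (le_sup_right (α := MeasurableSpace α) B hB)

end Rectangles

section Conditioning

variable {Ω : Type*} {m₀ : MeasurableSpace Ω} {μ : Measure Ω}

theorem setIntegral_cond {E : Type*} [NormedAddCommGroup E] [NormedSpace ℝ E] (f : Ω → E)
    {A : Set Ω} (hA : MeasurableSet A) (B : Set Ω) :
    ∫ ω in A, f ω ∂μ[|B] = (μ B)⁻¹.toReal • ∫ ω in A ∩ B, f ω ∂μ := by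
  rw [ProbabilityTheory.cond, Measure.restrict_smul, Measure.restrict_restrict hA,
    integral_smul_measure]

theorem ae_succ_le_of_forall_supermartingale_cond [IsFiniteMeasure μ] {ℱ : Filtration ℕ m₀}
    {𝒢 : MeasurableSpace Ω} (h𝒢 : 𝒢 ≤ m₀) {t : ℕ} (hℱ : ℱ (t + 1) ≤ ℱ t ⊔ 𝒢) {M : ℕ → Ω → ℝ}
    (hM : Supermartingale M ℱ μ)
    (hcond : ∀ B, MeasurableSet[𝒢] B → μ B ≠ 0 → Supermartingale M ℱ μ[|B]) :
    M (t + 1) ≤ᵐ[μ] M t := by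
  have hint := (hM.integrable t).sub (hM.integrable (t + 1))
  have hmeas : StronglyMeasurable[ℱ t ⊔ 𝒢] (M t - M (t + 1)) :=
    ((hM.stronglyAdapted t).mono le_sup_left).sub ((hM.stronglyAdapted (t + 1)).mono hℱ)
  rw [← eventually_sub_nonneg]
  refine ae_nonneg_of_forall_setIntegral_inter_nonneg (ℱ.le t) h𝒢 hmeas hint fun A B hA hB => ?_
  rcases eq_or_ne (μ B) 0 with hμB | hμB
  · rw [setIntegral_measure_zero _ (measure_mono_null Set.inter_subset_right hμB)]
  have hle := (hcond B hB hμB).setIntegral_le t.le_succ hA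
  rw [setIntegral_cond _ (ℱ.le t A hA), setIntegral_cond _ (ℱ.le t A hA)] at hle
  have hpos : 0 < (μ B)⁻¹.toReal :=
    ENNReal.toReal_pos (ENNReal.inv_ne_zero.2 (measure_ne_top μ B)) (ENNReal.inv_ne_top.2 hμB)
  rw [integral_sub' (hM.integrable t).integrableOn (hM.integrable (t + 1)).integrableOn]
  exact sub_nonneg.2 (le_of_mul_le_mul_left hle hpos)

/-- Stability of a family of laws `S` under conditioning on the events of any single `σ`-algebra
`𝒢 t`, here the information revealed between times `t` and `t + 1`. -/
def IsClosedUnderCond (𝒢 : ℕ → MeasurableSpace Ω) (S : Set (Measure Ω)) : Prop :=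
  ∀ μ ∈ S, ∀ t B, MeasurableSet[𝒢 t] B → μ B ≠ 0 → μ[|B] ∈ S

namespace IsClosedUnderCond

variable {ℱ : Filtration ℕ m₀} {𝒢 : ℕ → MeasurableSpace Ω} {S : Set (Measure Ω)} {M : ℕ → Ω → ℝ}

theorem ae_antitone [IsFiniteMeasure μ] (hS : IsClosedUnderCond 𝒢 S) (h𝒢 : ∀ t, 𝒢 t ≤ m₀)
    (hℱ : ∀ t, ℱ (t + 1) ≤ ℱ t ⊔ 𝒢 t) (hM : ∀ ν ∈ S, Supermartingale M ℱ ν) (hμ : μ ∈ S) :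
    ∀ᵐ ω ∂μ, Antitone fun t => M t ω := by
  have hstep : ∀ t, M (t + 1) ≤ᵐ[μ] M t := fun t =>
    ae_succ_le_of_forall_supermartingale_cond (h𝒢 t) (hℱ t) (hM μ hμ) fun B hB hμB =>
      hM _ (hS μ hμ t B hB hμB)
  filter_upwards [ae_all_iff.2 hstep] with ω hω using antitone_nat_of_succ_le hω

end IsClosedUnderCond

end Conditioning

section ProductMeasures

variable {ι : Type*} {X : ι → Type*} {mX : ∀ i, MeasurableSpace (X i)}
  (P : ∀ i, Measure (X i)) [∀ i, IsProbabilityMeasure (P i)]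

theorem eq_infinitePi_of_isCofinal {C : Set (Finset ι)} (hC : IsCofinal C)
    {ν : Measure (∀ i, X i)}
    (hν : ∀ u ∈ C, ∀ A : ∀ i, Set (X i), (∀ i, MeasurableSet (A i)) →
      ν ((u : Set ι).pi A) = ∏ i ∈ u, P i (A i)) :
    ν = Measure.infinitePi P := by
  refine Measure.eq_infinitePi P fun s A hA => ?_
  obtain ⟨u, hu, hsu⟩ := hC s
  let A' : ∀ i, Set (X i) := fun i => if i ∈ s then A i else Set.univ
  have hA'meas : ∀ i, MeasurableSet (A' i) := fun i => by
    simp only [A']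
    split_ifs
    exacts [hA i, .univ]
  have hbox : (s : Set ι).pi A = (u : Set ι).pi A' := by
    ext x
    grind
  rw [hbox, hν u hu A' hA'meas]
  refine (prod_subset_one_on_sdiff hsu (fun i hi => ?_) fun i hi => ?_).symm
  · simp only [A', if_neg (mem_sdiff.1 hi).2, measure_univ]
  · simp only [A', if_pos hi]

theorem infinitePi_cond_eval_preimage [DecidableEq ι] (i : ι) {B : Set (X i)} (hB : MeasurableSet B)
    (hPB : P i B ≠ 0) :
    (Measure.infinitePi P)[|Function.eval i ⁻¹' B] =
      Measure.infinitePi (Function.update P i (P i)[|B]) := by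
  have hprob : ∀ j, IsProbabilityMeasure (Function.update P i (P i)[|B] j) :=
    (Function.forall_update_iff P fun _ ρ => IsProbabilityMeasure ρ).2
      ⟨cond_isProbabilityMeasure hPB, fun _ _ => inferInstance⟩
  have hcofinal : IsCofinal {u : Finset ι | i ∈ u} := fun s =>
    ⟨insert i s, mem_insert_self i s, subset_insert i s⟩
  refine eq_infinitePi_of_isCofinal _ hcofinal fun u (hu : i ∈ u) A hA => ?_
  have hbox : Function.eval i ⁻¹' B ∩ (u : Set ι).pi A =
      (u : Set ι).pi (Function.update A i (B ∩ A i)) := by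
    ext x
    grind
  have hmeas : ∀ j ∈ u, MeasurableSet (Function.update A i (B ∩ A i) j) := fun j _ =>
    (Function.forall_update_iff A fun _ s => MeasurableSet s).2
      ⟨hB.inter (hA i), fun k _ => hA k⟩ j
  rw [cond_apply (measurable_pi_apply i hB),
    (measurePreserving_eval_infinitePi P i).measure_preimage hB.nullMeasurableSet, hbox,
    Measure.infinitePi_pi P hmeas, ← mul_prod_erase u _ hu, ← mul_prod_erase u _ hu,
    Function.update_self, Function.update_self, cond_apply hB, mul_assoc]
  congr 2
  refine prod_congr rfl fun j hj => ?_
  rw [Function.update_of_ne (ne_of_mem_erase hj), Function.update_of_ne (ne_of_mem_erase hj)]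

end ProductMeasures

theorem pi_fin_absolutelyContinuous {n : ℕ} {X : Fin n → Type*} [∀ i, MeasurableSpace (X i)]
    {μ ν : ∀ i, Measure (X i)} [∀ i, SigmaFinite (μ i)] [∀ i, SigmaFinite (ν i)]
    (h : ∀ i, μ i ≪ ν i) : Measure.pi μ ≪ Measure.pi ν := by
  induction n with
  | zero => rw [Measure.pi_of_empty, Measure.pi_of_empty]
  | succ n ih =>
    rw [← (measurePreserving_piFinSuccAbove μ 0).symm.map_eq,
      ← (measurePreserving_piFinSuccAbove ν 0).symm.map_eq]
    exact ((h 0).prod (ih fun i => h _)).map (MeasurableEquiv.measurable _)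

theorem pi_absolutelyContinuous {ι : Type*} [Fintype ι] {X : ι → Type*}
    [∀ i, MeasurableSpace (X i)] {μ ν : ∀ i, Measure (X i)} [∀ i, SigmaFinite (μ i)]
    [∀ i, SigmaFinite (ν i)] (h : ∀ i, μ i ≪ ν i) : Measure.pi μ ≪ Measure.pi ν := by
  set e := (Fintype.equivFin ι).symm
  rw [← (measurePreserving_piCongrLeft μ e).map_eq, ← (measurePreserving_piCongrLeft ν e).map_eq]
  exact (pi_fin_absolutelyContinuous fun i => h (e i)).map (MeasurableEquiv.measurable _)

section SequentialLaws

instance : IsProbabilityMeasure (stdGaussian d) :=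
  inferInstanceAs (IsProbabilityMeasure (Measure.pi _))

theorem stdGaussian_absolutelyContinuous : stdGaussian d ≪ volume :=
  pi_absolutelyContinuous fun _ => gaussianReal_absolutelyContinuous 0 one_ne_zero

/-- The laws `𝒟` on `ℝ^d` with a Lebesgue density, which by Radon–Nikodym is encoded as absolute
continuity. -/
def absolutelyContinuousLaws : Set (Measure (RV d)) :=
  {P | IsProbabilityMeasure P ∧ P ≪ volume}

theorem F_succ_le (t : ℕ) :
    F d (t + 1) ≤ F d t ⊔ MeasurableSpace.comap (Function.eval t) inferInstance := by
  refine iSup₂_le fun s hs => ?_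
  rcases Nat.lt_succ_iff_lt_or_eq.1 (Finset.mem_range.1 hs) with hlt | rfl
  · exact le_sup_of_le_left (le_iSup₂_of_le s (Finset.mem_range.2 hlt) le_rfl)
  · exact le_sup_right

variable {d} {μ : Measure (Seq d)}

theorem prefixLaw_pi {t : ℕ} {A : ℕ → Set (RV d)} (hA : ∀ s ∈ Finset.range t, MeasurableSet (A s)) :
    prefixLaw d μ t (Set.univ.pi fun s => A s) = μ ((Finset.range t : Set ℕ).pi A) := by
  have hmeas : Measurable (prefixMap d t) := measurable_pi_lambda _ fun s => measurable_pi_apply _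
  rw [prefixLaw, Measure.map_apply hmeas
    (.univ_pi fun s : Fin t => hA s (Finset.mem_range.2 s.is_lt))]
  congr 1
  ext ω
  simp [prefixMap, Fin.forall_iff, Set.mem_pi]

theorem isProductLaw_iff_eq_infinitePi {Ps : ℕ → Measure (RV d)}
    [∀ t, IsProbabilityMeasure (Ps t)] :
    IsProductLaw d μ Ps ↔ μ = Measure.infinitePi Ps := by
  refine ⟨fun hμ => ?_, ?_⟩
  · have hcofinal : IsCofinal (Set.range Finset.range) := fun s =>
      ⟨_, Set.mem_range_self _, s.subset_range_sup_succ⟩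
    refine eq_infinitePi_of_isCofinal Ps hcofinal ?_
    rintro _ ⟨t, rfl⟩ A hA
    rw [← prefixLaw_pi fun s _ => hA s, hμ.2 t _ fun s => hA s, Finset.prod_range]
  · rintro rfl
    refine ⟨inferInstance, fun t A hA => ?_⟩
    obtain ⟨A, rfl⟩ : ∃ A' : ℕ → Set (RV d), A = fun s : Fin t => A' s :=
      ⟨Function.extend Fin.val A fun _ => Set.univ,
        funext fun s => (Fin.val_injective.extend_apply A _ s).symm⟩
    have hA' : ∀ s ∈ Finset.range t, MeasurableSet (A s) := fun s hs =>
      hA ⟨s, Finset.mem_range.1 hs⟩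
    rw [prefixLaw_pi hA', Measure.infinitePi_pi Ps hA', Finset.prod_range]

theorem isClosedUnderCond_productLaws {PP : Set (Measure (RV d))}
    (hprob : ∀ P ∈ PP, IsProbabilityMeasure P)
    (hcond : ∀ P ∈ PP, ∀ B, MeasurableSet B → P B ≠ 0 → P[|B] ∈ PP) :
    IsClosedUnderCond (fun t => MeasurableSpace.comap (Function.eval t) inferInstance)
      (productLaws d PP) := by
  rintro μ ⟨Ps, hPs, hμ⟩ t _ ⟨B, hB, rfl⟩ hμB
  have hPsProb : ∀ s, IsProbabilityMeasure (Ps s) := fun s => hprob _ (hPs s)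
  rw [isProductLaw_iff_eq_infinitePi] at hμ
  subst hμ
  rw [(measurePreserving_eval_infinitePi Ps t).measure_preimage hB.nullMeasurableSet] at hμB
  have hupdate : ∀ s, Function.update Ps t (Ps t)[|B] s ∈ PP :=
    (Function.forall_update_iff Ps fun _ P => P ∈ PP).2
      ⟨hcond _ (hPs t) B hB hμB, fun s _ => hPs s⟩
  have hupdateProb : ∀ s, IsProbabilityMeasure (Function.update Ps t (Ps t)[|B] s) :=
    fun s => hprob _ (hupdate s)
  exact ⟨_, hupdate, isProductLaw_iff_eq_infinitePi.2 (infinitePi_cond_eval_preimage Ps t hB hμB)⟩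

variable (d) in
theorem isClosedUnderCond_productLaws_absolutelyContinuousLaws :
    IsClosedUnderCond (fun t => MeasurableSpace.comap (Function.eval t) inferInstance)
      (productLaws d (absolutelyContinuousLaws d)) := by
  refine isClosedUnderCond_productLaws (fun P hP => hP.1) fun P ⟨_, hP⟩ B _ hPB => ?_
  exact ⟨cond_isProbabilityMeasure hPB, cond_absolutelyContinuous.trans hP⟩

end SequentialLaws

theorem statement10_general {Ω : Type*} {m₀ : MeasurableSpace Ω} {ℱ : Filtration ℕ m₀}
    {𝒢 : ℕ → MeasurableSpace Ω} {S : Set (Measure Ω)} (hS : IsClosedUnderCond 𝒢 S)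
    (h𝒢 : ∀ t, 𝒢 t ≤ m₀) (hℱ : ∀ t, ℱ (t + 1) ≤ ℱ t ⊔ 𝒢 t) {μ : Measure Ω} [IsFiniteMeasure μ]
    (hμ : μ ∈ S) (M : ℕ → Ω → ℝ) :
    ((∀ ν ∈ S, Supermartingale M ℱ ν) → ∀ᵐ ω ∂μ, Antitone fun t => M t ω) ∧
    ((∀ ν ∈ S, Martingale M ℱ ν) → ∀ᵐ ω ∂μ, ∀ s t, M s ω = M t ω) := by
  refine ⟨fun hM => hS.ae_antitone h𝒢 hℱ hM hμ, fun hM => ?_⟩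
  have hle := hS.ae_antitone h𝒢 hℱ (fun ν hν => (hM ν hν).supermartingale) hμ
  have hge := hS.ae_antitone h𝒢 hℱ (fun ν hν => (hM ν hν).neg.supermartingale) hμ
  filter_upwards [hle, hge] with ω hle hge
  have hconst : ∀ t, M t ω = M 0 ω := fun t =>
    (hle t.zero_le).antisymm (neg_le_neg_iff.1 (hge t.zero_le))
  exact fun s t => (hconst s).trans (hconst t).symm

/-- A process that is an NSM for every independent-product law with
Lebesgue-density marginals is `Γ`-a.s. nonincreasing; if it is an NM for all such laws,
it is `Γ`-a.s. constant. -/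
theorem statement10 (Γ : Measure (Seq d)) (hΓ : IsGamma d Γ) (M : ℕ → Seq d → ℝ) :
    ((∀ μ : Measure (Seq d), (∃ Ps : ℕ → Measure (RV d),
        (∀ t, IsProbabilityMeasure (Ps t) ∧ Ps t ≪ (volume : Measure (RV d))) ∧
        IsProductLaw d μ Ps) → IsNSM d μ M) →
      Γ {ω | ∃ t : ℕ, 1 ≤ t ∧ M (t - 1) ω < M t ω} = 0) ∧
    ((∀ μ : Measure (Seq d), (∃ Ps : ℕ → Measure (RV d),
        (∀ t, IsProbabilityMeasure (Ps t) ∧ Ps t ≪ (volume : Measure (RV d))) ∧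
        IsProductLaw d μ Ps) → IsNM d μ M) →
      Γ {ω | ∃ t : ℕ, 1 ≤ t ∧ M t ω ≠ M (t - 1) ω} = 0) := by
  have hΓ_mem : Γ ∈ productLaws d (absolutelyContinuousLaws d) :=
    ⟨_, fun _ => ⟨inferInstance, stdGaussian_absolutelyContinuous d⟩, hΓ⟩
  have := hΓ.1
  have h := statement10_general (isClosedUnderCond_productLaws_absolutelyContinuousLaws d)
    (fun t => (measurable_pi_apply t).comap_le) (F_succ_le d) hΓ_mem M
  refine ⟨fun hM => ?_, fun hM => ?_⟩ <;> rw [measure_eq_zero_iff_ae_notMem]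
  · filter_upwards [h.1 fun μ hμ => (hM μ hμ).2] with ω hω ⟨t, _, hlt⟩
    exact hlt.not_ge (hω t.pred_le)
  · filter_upwards [h.2 fun μ hμ => (hM μ hμ).2] with ω hω ⟨t, _, hne⟩
    exact hne (hω t (t - 1))

end SeqTest
end
end

section
/- Let K ⊆ ℝ^d be a Borel set with 0 < Leb(K), let p be a probability density on ℝ^d supported on K, and let γ_n be a sequence of finite mixtures of nondegenerate Gaussian densities with d_n := ∫_{ℝ^d}|p − γ_n| dx → 0 and d_n < 1 for all n. Then each K-truncation γ_n|_K (the density γ_n·1_K normalized to integrate to 1, which is a finite mixture of K-truncated Gaussian densities whenever ∫_K γ_n > 0) satisfies ∫_{ℝ^d} | p − γ_n|_K | dx ≤ 2 d_n/(1 − d_n); in particular, γ_n|_K → p in L¹. -/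
open MeasureTheory ProbabilityTheory Filter Finset Matrix
open scoped Classical

noncomputable section

namespace SeqTest

variable (d : ℕ)


/-!
Since `p` vanishes off `K`, cutting `γₙ` down to `K` can only bring it closer to `p`. Dividing a
nonnegative function by its total mass `m` moves it by exactly `|m - 1|` in `L¹`, and for
`m = ∫_K γₙ` this is `|∫ (γₙ 1_K - p)| ≤ dₙ`. Hence the truncation is within `2dₙ ≤ 2dₙ/(1 - dₙ)`
of `p`.

Gaussian densities are integrable because a factorization `S⁻¹ = BᵀB` and the linear change of
variables `y = Bx` turn `exp (-xᵀS⁻¹x/2)` into a product of one-dimensional Gaussians.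
-/

section Truncation

variable {X : Type*} [MeasurableSpace X] {μ : Measure X} {K : Set X}

lemma integral_norm_sub_indicator_le {E : Type*} [NormedAddCommGroup E] {f g : X → E}
    (hfg : Integrable (fun x => f x - g x) μ) (hf_supp : ∀ᵐ x ∂μ, x ∉ K → f x = 0) :
    ∫ x, ‖f x - K.indicator g x‖ ∂μ ≤ ∫ x, ‖f x - g x‖ ∂μ := by
  refine integral_mono_of_nonneg (ae_of_all _ fun x => norm_nonneg _) hfg.norm ?_
  filter_upwards [hf_supp] with x hx
  by_cases hxK : x ∈ K <;> simp [hxK, hx]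

lemma integral_abs_sub_div_integral_self {h : X → ℝ} (h_nonneg : 0 ≤ᵐ[μ] h)
    (h_pos : 0 < ∫ x, h x ∂μ) :
    ∫ x, |h x - h x / ∫ y, h y ∂μ| ∂μ = |(∫ x, h x ∂μ) - 1| := by
  set m := ∫ x, h x ∂μ
  calc ∫ x, |h x - h x / m| ∂μ
      = ∫ x, h x * |1 - m⁻¹| ∂μ := by
        refine integral_congr_ae ?_
        filter_upwards [h_nonneg] with x hx
        rw [div_eq_mul_inv, ← mul_one_sub, abs_mul, abs_of_nonneg hx]
    _ = |m * (1 - m⁻¹)| := by rw [integral_mul_const, abs_mul, abs_of_pos h_pos]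
    _ = |m - 1| := by rw [mul_one_sub, mul_inv_cancel₀ h_pos.ne']

lemma integral_abs_sub_div_integral_le {p h : X → ℝ} (hp_int : ∫ x, p x ∂μ = 1)
    (h_nonneg : 0 ≤ᵐ[μ] h) (h_pos : 0 < ∫ x, h x ∂μ) :
    ∫ x, |p x - h x / ∫ y, h y ∂μ| ∂μ ≤ 2 * ∫ x, |p x - h x| ∂μ := by
  have hp : Integrable p μ := .of_integral_ne_zero (by simp [hp_int])
  have hh : Integrable h μ := .of_integral_ne_zero h_pos.ne'
  set m := ∫ x, h x ∂μ
  have hph : Integrable (fun x => |p x - h x|) μ := (hp.sub hh).abs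
  have hhm : Integrable (fun x => |h x - h x / m|) μ := (hh.sub (hh.div_const m)).abs
  have mass_le : |m - 1| ≤ ∫ x, |p x - h x| ∂μ :=
    calc |m - 1| = |∫ x, (p x - h x) ∂μ| := by rw [integral_sub hp hh, hp_int, abs_sub_comm]
      _ ≤ ∫ x, |p x - h x| ∂μ := abs_integral_le_integral_abs
  calc ∫ x, |p x - h x / m| ∂μ
      ≤ ∫ x, (|p x - h x| + |h x - h x / m|) ∂μ :=
        integral_mono (hp.sub (hh.div_const m)).abs (hph.add hhm) fun _ => abs_sub_le _ _ _
    _ = ∫ x, |p x - h x| ∂μ + |m - 1| := by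
        rw [integral_add hph hhm, integral_abs_sub_div_integral_self h_nonneg h_pos]
    _ ≤ 2 * ∫ x, |p x - h x| ∂μ := by linarith

lemma setIntegral_pos_of_integral_abs_sub_lt_one (hK : NullMeasurableSet K μ) {p g : X → ℝ}
    (hp_int : ∫ x, p x ∂μ = 1) (hp_supp : ∀ᵐ x ∂μ, x ∉ K → p x = 0) (hg : Integrable g μ)
    (hlt : ∫ x, |p x - g x| ∂μ < 1) : 0 < ∫ x in K, g x ∂μ := by
  have hp : Integrable p μ := .of_integral_ne_zero (by simp [hp_int])
  have mass_defect_lt : 1 - ∫ x in K, g x ∂μ < 1 :=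
    calc 1 - ∫ x in K, g x ∂μ = ∫ x, (p x - K.indicator g x) ∂μ := by
          rw [integral_sub hp (hg.indicator₀ hK), hp_int, integral_indicator₀ hK]
      _ ≤ ∫ x, |p x - K.indicator g x| ∂μ := (le_abs_self _).trans abs_integral_le_integral_abs
      _ ≤ ∫ x, |p x - g x| ∂μ := integral_norm_sub_indicator_le (hp.sub hg) hp_supp
      _ < 1 := hlt
  linarith

lemma integral_abs_sub_truncation_le (hK : NullMeasurableSet K μ) {p g : X → ℝ}
    (hp_int : ∫ x, p x ∂μ = 1) (hp_supp : ∀ᵐ x ∂μ, x ∉ K → p x = 0) (hg : Integrable g μ)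
    (hg_nonneg : 0 ≤ᵐ[μ] g) (hg_pos : 0 < ∫ x in K, g x ∂μ) :
    ∫ x, |p x - K.indicator g x / ∫ y in K, g y ∂μ| ∂μ ≤ 2 * ∫ x, |p x - g x| ∂μ := by
  have hp : Integrable p μ := .of_integral_ne_zero (by simp [hp_int])
  have indicator_nonneg : 0 ≤ᵐ[μ] K.indicator g := by
    filter_upwards [hg_nonneg] with x hx using Set.indicator_apply_nonneg fun _ => hx
  rw [← integral_indicator₀ hK] at hg_pos ⊢
  calc ∫ x, |p x - K.indicator g x / ∫ y, K.indicator g y ∂μ| ∂μ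
      ≤ 2 * ∫ x, |p x - K.indicator g x| ∂μ :=
        integral_abs_sub_div_integral_le hp_int indicator_nonneg hg_pos
    _ ≤ 2 * ∫ x, |p x - g x| ∂μ :=
        mul_le_mul_of_nonneg_left (integral_norm_sub_indicator_le (hp.sub hg) hp_supp)
          zero_le_two

theorem statement12_general (hK : NullMeasurableSet K μ) {p : X → ℝ} (hp_int : ∫ x, p x ∂μ = 1)
    (hp_supp : ∀ᵐ x ∂μ, x ∉ K → p x = 0) {ι : Type*} {l : Filter ι} {g : ι → X → ℝ}
    (hg : ∀ i, Integrable (g i) μ) (hg_nonneg : ∀ i, 0 ≤ᵐ[μ] g i)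
    (hg_pos : ∀ i, 0 < ∫ x in K, g i x ∂μ)
    (htend : Tendsto (fun i => ∫ x, |p x - g i x| ∂μ) l (nhds 0)) :
    (∀ i, ∫ x, |p x - K.indicator (g i) x / (∫ y in K, g i y ∂μ)| ∂μ ≤
        2 * ∫ x, |p x - g i x| ∂μ) ∧
    Tendsto (fun i => ∫ x, |p x - K.indicator (g i) x / (∫ y in K, g i y ∂μ)| ∂μ)
      l (nhds 0) := by
  have bound i := integral_abs_sub_truncation_le hK hp_int hp_supp (hg i) (hg_nonneg i) (hg_pos i)
  refine ⟨bound, squeeze_zero (fun i => integral_nonneg fun x => abs_nonneg _) bound ?_⟩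
  simpa only [mul_zero] using htend.const_mul 2

end Truncation

section GaussianMixture

lemma integrable_comp_linearMap_of_det_ne_zero {E F : Type*} [NormedAddCommGroup E]
    [NormedSpace ℝ E] [FiniteDimensional ℝ E] [MeasurableSpace E] [BorelSpace E]
    [NormedAddCommGroup F] {μ : Measure E} [μ.IsAddHaarMeasure] {g : E → F} (hg : Integrable g μ)
    {f : E →ₗ[ℝ] E} (hf : LinearMap.det f ≠ 0) : Integrable (fun x => g (f x)) μ := by
  have hg_map : Integrable g (μ.map f) := by
    rw [Measure.map_linearMap_addHaar_eq_smul_addHaar μ hf]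
    exact hg.smul_measure ENNReal.ofReal_ne_top
  exact hg_map.comp_measurable f.continuous_of_finiteDimensional.measurable

variable {ι : Type*} [Fintype ι]

lemma integrable_exp_neg_mul_dotProduct_self {b : ℝ} (hb : 0 < b) :
    Integrable fun y : ι → ℝ => Real.exp (-b * (y ⬝ᵥ y)) := by
  simp only [dotProduct, ← sq, Finset.mul_sum, Real.exp_sum]
  exact Integrable.fintype_prod fun _ => integrable_exp_neg_mul_sq hb

open scoped MatrixOrder in
lemma exists_det_ne_zero_and_eq_transpose_mul_self {A : Matrix ι ι ℝ} (hA : A.PosDef) :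
    ∃ B : Matrix ι ι ℝ, B.det ≠ 0 ∧ A = Bᵀ * B := by
  obtain ⟨B, hB, hAB⟩ :=
    CStarAlgebra.isStrictlyPositive_iff_eq_star_mul_self.mp hA.isStrictlyPositive
  exact ⟨B, ((Matrix.isUnit_iff_isUnit_det B).mp hB).ne_zero, hAB⟩

lemma integrable_exp_neg_mul_dotProduct_mulVec {A : Matrix ι ι ℝ} (hA : A.PosDef) {b : ℝ}
    (hb : 0 < b) : Integrable fun x : ι → ℝ => Real.exp (-b * (x ⬝ᵥ (A *ᵥ x))) := by
  obtain ⟨B, hB, rfl⟩ := exists_det_ne_zero_and_eq_transpose_mul_self hA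
  have quadratic_form (x : ι → ℝ) : x ⬝ᵥ ((Bᵀ * B) *ᵥ x) = (B *ᵥ x) ⬝ᵥ (B *ᵥ x) := by
    rw [← mulVec_mulVec, dotProduct_mulVec, vecMul_transpose]
  simp only [quadratic_form]
  exact integrable_comp_linearMap_of_det_ne_zero (f := toLin' B)
    (integrable_exp_neg_mul_dotProduct_self hb) (by rwa [LinearMap.det_toLin'])

variable {d}

lemma integrable_gaussDensityFn (m : RV d) {S : Matrix (Fin d) (Fin d) ℝ} (hS : S.PosDef) :
    Integrable (gaussDensityFn d m S) :=
  ((integrable_exp_neg_mul_dotProduct_mulVec hS.inv one_half_pos).comp_sub_right m).const_mul _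

lemma gaussDensityFn_pos (m : RV d) {S : Matrix (Fin d) (Fin d) ℝ} (hS : S.PosDef) (x : RV d) :
    0 < gaussDensityFn d m S x := by
  have := hS.det_pos
  unfold gaussDensityFn
  positivity

lemma IsGaussianMixture.integrable {g : RV d → ℝ} (hg : IsGaussianMixture d g) :
    Integrable g := by
  obtain ⟨k, α, ms, Ss, -, -, hS, rfl⟩ := hg
  exact integrable_finsetSum _ fun i _ => (integrable_gaussDensityFn (ms i) (hS i)).const_mul _

lemma IsGaussianMixture.nonneg {g : RV d → ℝ} (hg : IsGaussianMixture d g) : 0 ≤ g := by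
  obtain ⟨k, α, ms, Ss, hα, -, hS, rfl⟩ := hg
  exact fun x =>
    Finset.sum_nonneg fun i _ => mul_nonneg (hα i) (gaussDensityFn_pos (ms i) (hS i) x).le

end GaussianMixture

/-- Truncations to `K` of Gaussian mixtures approximating a density `p`
supported on `K` converge to `p` in `L¹`, with the quantitative bound `2dₙ/(1−dₙ)`. -/
theorem statement12 (K : Set (RV d)) (hK : MeasurableSet K)
    (hKpos : 0 < volume K)
    (p : RV d → ℝ) (hp_meas : Measurable p) (hp_nonneg : ∀ x, 0 ≤ p x)
    (hp_int : ∫ x, p x = 1)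
    (hp_supp : ∀ᵐ x ∂(volume : Measure (RV d)), x ∉ K → p x = 0)
    (γn : ℕ → RV d → ℝ) (hmix : ∀ n, IsGaussianMixture d (γn n))
    (hlt : ∀ n, ∫ x, |p x - γn n x| < 1)
    (htend : Tendsto (fun n => ∫ x, |p x - γn n x|) atTop (nhds 0)) :
    (∀ n, ∫ x, |p x - K.indicator (γn n) x / (∫ y in K, γn n y)| ≤
        2 * (∫ x, |p x - γn n x|) / (1 - ∫ x, |p x - γn n x|)) ∧
    Tendsto (fun n => ∫ x, |p x - K.indicator (γn n) x / (∫ y in K, γn n y)|)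
      atTop (nhds 0) := by
  obtain ⟨bound, tendsto_zero⟩ := statement12_general hK.nullMeasurableSet hp_int hp_supp
    (fun n => (hmix n).integrable) (fun n => ae_of_all _ (hmix n).nonneg)
    (fun n => setIntegral_pos_of_integral_abs_sub_lt_one hK.nullMeasurableSet hp_int hp_supp
      (hmix n).integrable (hlt n)) htend
  refine ⟨fun n => (bound n).trans (le_div_self ?_ (sub_pos.mpr (hlt n)) ?_), tendsto_zero⟩
  · positivity
  · exact sub_le_self _ (by positivity)

end SeqTest
end
end
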